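/- Let u be a subharmonic function on the open unit disc 𝔻 that is bounded from above, admitting the representation u(z) = ∫_𝔻 log(|z−ζ|/|1−z·conj(ζ)|) dμ(ζ) − (1/2π)∫₀^{2π} ((1−|z|²)/|e^{iθ}−z|²) dψ(θ) + C, where μ is a positive Borel measure on 𝔻 with ∫_𝔻 (1−|ζ|) dμ(ζ) < ∞, ψ is a finite positive Borel measure on [0,2π), and C ∈ ℝ. Let λ be the complete measure of u, i.e. λ(M) = ∫_{𝔻∩M} (1−|ζ|) dμ(ζ) + ψ(M ∩ ∂𝔻) for Borel sets M ⊆ closure(𝔻). Let γ ∈ (0,1] and p ∈ (1,∞). Then m_p(r,u) = O((1−r)^{γ−1}) as r ↑ 1 if and only if (∫₀^{2π} λ(C(φ,δ))^p dφ)^{1/p} = O(δ^γ) as δ ↓ 0 (for 0 < δ < 1). -/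

import Mathlib

open MeasureTheory Complex

/-- The Carleson box `C(φ,δ) = {ζ ∈ closure 𝔻 : |ζ| ≥ 1-δ, |arg ζ - φ| ≤ πδ}`
(the angular condition is expressed via a representative `θ` of the argument,
so that it is `2π`-periodic in `φ`). -/
noncomputable def carlesonBox (φ δ : ℝ) : Set ℂ :=
  {ζ : ℂ | ‖ζ‖ ≤ 1 ∧ 1 - δ ≤ ‖ζ‖ ∧
    ∃ θ : ℝ, |θ - φ| ≤ Real.pi * δ ∧
      ζ = (‖ζ‖ : ℂ) * Complex.exp (θ * Complex.I)}

/-- The `p`-th integral mean `m_p(r,u) = ((1/2π) ∫₀^{2π} |u(re^{iθ})|^p dθ)^{1/p}`. -/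
noncomputable def mpMean (p r : ℝ) (u : ℂ → ℝ) : ℝ :=
  ((1 / (2 * Real.pi)) *
      ∫ θ in (0 : ℝ)..(2 * Real.pi),
        |u ((r : ℂ) * Complex.exp (θ * Complex.I))| ^ p) ^ (1 / p)

/-! `C - u(z)` is the integral against `λ` of a single kernel `K(z, ζ)`: the Green function divided
by `1 - |ζ|` inside the disc, the Poisson kernel on the circle. Let `|z| = 1 - δ`.

On the box of size `δ` in the direction of `z` the kernel is at least `1 / (200 δ)`, hence
`λ(C(φ,δ)) ≤ 200 δ (C - u)((1 - δ) e^{iφ})`; this bounds the box means by the integral means.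

Conversely, off a box of size `t ≥ 2δ` the kernel is at most of order `δ / t²`, so off the box of
size `2δ` it is dominated by `(32 / δ) ∑ₙ 4⁻ⁿ 1_{C(φ, 2ⁿ⁺¹ δ)}`. Inside that box it has only a
logarithmic singularity, and its `L^p` norm over the rotations of `z` by angles `|s| ≤ δ` is
`O(δ^{1/p - 1})`. Averaging over these rotations, which leave integrals over the circle unchanged,
and Minkowski's inequality bound the `L^p` norm of `C - u` on `|z| = 1 - δ` by a constant times
`δ⁻¹ ∑ₙ 4⁻ⁿ ‖λ(C(·, 2ⁿ⁺¹ δ))‖_p`. The sum is `O(δ^γ)` because `γ ≤ 1`. Finally, the constant `C`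
changes `m_p` by at most `|C|`, which is `O((1 - r)^{γ - 1})`, again because `γ ≤ 1`. -/

section Development

open Set Filter Asymptotics
open scoped ENNReal Topology Real

theorem norm_circleMap_sub_circleMap_sq (r ρ a b : ℝ) :
    ‖circleMap 0 r a - circleMap 0 ρ b‖ ^ 2 =
      (r - ρ) ^ 2 + 4 * r * ρ * Real.sin ((a - b) / 2) ^ 2 := by
  have half_angle : Real.sin ((a - b) / 2) ^ 2 = (1 - Real.cos (a - b)) / 2 := by
    rw [Real.sin_sq_eq_half_sub, mul_div_cancel₀ _ two_ne_zero]
    ring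
  simp only [circleMap_zero, ← normSq_eq_norm_sq, normSq_apply, sub_re, sub_im, re_ofReal_mul,
    im_ofReal_mul, exp_ofReal_mul_I_re, exp_ofReal_mul_I_im, half_angle, Real.cos_sub]
  linear_combination r ^ 2 * Real.sin_sq_add_cos_sq a + ρ ^ 2 * Real.sin_sq_add_cos_sq b

theorem abs_sub_div_pi_le_norm_circleMap_sub {r ρ a b : ℝ} (hr : 1 / 2 ≤ r) (hρ : 1 / 2 ≤ ρ)
    (hab : |a - b| ≤ π) : |a - b| / π ≤ ‖circleMap 0 r a - circleMap 0 ρ b‖ := by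
  have jordan : |a - b| / π ≤ |Real.sin ((a - b) / 2)| := by
    have h := Real.mul_abs_le_abs_sin (x := (a - b) / 2) (by rw [abs_div, abs_two]; linarith)
    rw [abs_div, abs_two] at h
    exact le_of_eq_of_le (by ring) h
  refine jordan.trans (le_of_sq_le_sq ?_ (norm_nonneg _))
  rw [norm_circleMap_sub_circleMap_sq, sq_abs]
  nlinarith [sq_nonneg (r - ρ), mul_nonneg (sub_nonneg.2 hr) (sub_nonneg.2 hρ),
    sq_nonneg (Real.sin ((a - b) / 2))]

theorem norm_circleMap_sub_circleMap_le (r ρ a b : ℝ) :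
    ‖circleMap 0 r a - circleMap 0 ρ b‖ ≤ |r - ρ| + |ρ| * |a - b| := by
  have radial : ‖circleMap 0 r a - circleMap 0 ρ a‖ = |r - ρ| := by
    rw [circleMap_zero, circleMap_zero, ← sub_mul, norm_mul, norm_exp_ofReal_mul_I, mul_one,
      ← ofReal_sub, norm_real, Real.norm_eq_abs]
  have angular : ‖circleMap 0 ρ a - circleMap 0 ρ b‖ ≤ |ρ| * |a - b| := by
    simpa [dist_eq_norm] using (lipschitzWith_circleMap 0 ρ).dist_le_mul a b
  calc _ ≤ ‖circleMap 0 r a - circleMap 0 ρ a‖ + ‖circleMap 0 ρ a - circleMap 0 ρ b‖ :=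
        norm_sub_le_norm_sub_add_norm_sub ..
    _ ≤ _ := by rw [radial]; gcongr

theorem abs_arg_exp_mul_I_le (x : ℝ) : |arg (exp (x * I))| ≤ |x| := by
  rcases le_or_gt |x| π with hx | hx
  · rcases hx.eq_or_lt with h | h
    · exact (abs_arg_le_pi _).trans h.ge
    · rw [arg_exp_mul_I, (toIocMod_eq_self _).2 ⟨(abs_lt.1 h).1, by linarith [(abs_lt.1 h).2]⟩]
  · exact (abs_arg_le_pi _).trans hx.le

/-- The signed angle in `(-π, π]` from the ray in direction `φ` to the point `ζ`; it is the
difference `arg ζ - φ` in the definition of a Carleson box, reduced modulo `2π`. -/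
noncomputable def angleFrom (φ : ℝ) (ζ : ℂ) : ℝ := arg (ζ * exp (-φ * I))

theorem abs_angleFrom_le_pi (φ : ℝ) (ζ : ℂ) : |angleFrom φ ζ| ≤ π := abs_arg_le_pi _

theorem circleMap_norm_add_angleFrom (φ : ℝ) (ζ : ℂ) :
    circleMap 0 ‖ζ‖ (φ + angleFrom φ ζ) = ζ := by
  have hnorm : ‖ζ * exp (-φ * I)‖ = ‖ζ‖ := by
    rw [norm_mul, ← ofReal_neg, norm_exp_ofReal_mul_I, mul_one]
  have hpolar := norm_mul_exp_arg_mul_I (ζ * exp (-φ * I))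
  rw [hnorm] at hpolar
  calc circleMap 0 ‖ζ‖ (φ + angleFrom φ ζ)
      = ‖ζ‖ * exp (angleFrom φ ζ * I) * exp (φ * I) := by
        rw [circleMap_zero, ofReal_add, add_mul, add_comm, Complex.exp_add, mul_assoc]
    _ = ζ * (exp (-φ * I) * exp (φ * I)) := by rw [angleFrom, hpolar, mul_assoc]
    _ = ζ := by rw [← Complex.exp_add, neg_mul, neg_add_cancel, Complex.exp_zero, mul_one]

theorem abs_angleFrom_circleMap_le {r : ℝ} (hr : 0 ≤ r) (φ θ : ℝ) :
    |angleFrom φ (circleMap 0 r θ)| ≤ |θ - φ| := by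
  rcases hr.eq_or_lt with rfl | hr
  · simp [angleFrom]
  · have : circleMap 0 r θ * exp (-φ * I) = r * exp ((θ - φ : ℝ) * I) := by
      rw [circleMap_zero, mul_assoc, ← Complex.exp_add]
      push_cast
      ring_nf
    rw [angleFrom, this, arg_real_mul _ hr]
    exact abs_arg_exp_mul_I_le _

theorem measurable_angleFrom : Measurable fun q : ℝ × ℂ => angleFrom q.1 q.2 := by
  unfold angleFrom
  fun_prop

theorem mem_carlesonBox_iff {φ t : ℝ} {ζ : ℂ} :
    ζ ∈ carlesonBox φ t ↔ ‖ζ‖ ≤ 1 ∧ 1 - t ≤ ‖ζ‖ ∧ |angleFrom φ ζ| ≤ π * t := by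
  refine and_congr_right fun _ => and_congr_right fun _ => ⟨?_, fun h => ?_⟩
  · rintro ⟨θ, hθ, hζ⟩
    rw [← circleMap_zero] at hζ
    rw [hζ]
    exact (abs_angleFrom_circleMap_le (norm_nonneg ζ) φ θ).trans hθ
  · refine ⟨φ + angleFrom φ ζ, by rwa [add_sub_cancel_left], ?_⟩
    rw [← circleMap_zero, circleMap_norm_add_angleFrom]

theorem measurableSet_mem_carlesonBox (t : ℝ) :
    MeasurableSet {q : ℝ × ℂ | q.2 ∈ carlesonBox q.1 t} := by
  simp only [mem_carlesonBox_iff]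
  exact (measurableSet_le measurable_snd.norm measurable_const).inter
    ((measurableSet_le measurable_const measurable_snd.norm).inter
      (measurableSet_le measurable_angleFrom.abs measurable_const))

theorem measurableSet_carlesonBox (φ t : ℝ) : MeasurableSet (carlesonBox φ t) :=
  measurable_prodMk_left (measurableSet_mem_carlesonBox t)

theorem carlesonBox_eq_closedBall {t : ℝ} (ht : 1 ≤ t) (φ : ℝ) :
    carlesonBox φ t = Metric.closedBall 0 1 := by
  ext ζ
  rw [mem_carlesonBox_iff, mem_closedBall_zero_iff]
  refine ⟨And.left, fun h => ⟨h, by linarith [norm_nonneg ζ], ?_⟩⟩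
  exact (abs_angleFrom_le_pi φ ζ).trans (le_mul_of_one_le_right Real.pi_pos.le ht)

theorem measurable_measure_carlesonBox (lam : Measure ℂ) [SFinite lam] (t : ℝ) :
    Measurable fun φ => lam (carlesonBox φ t) :=
  measurable_measure_prodMk_left (measurableSet_mem_carlesonBox t)

/-- The Green function `-log |(z - ζ) / (1 - z ζ̄)|` of the unit disc. Since `log 0 = 0`, it takes
the value `0` instead of `∞` at `ζ = z`. -/
noncomputable def discGreen (z ζ : ℂ) : ℝ :=
  -Real.log (‖z - ζ‖ / ‖1 - z * (starRingEnd ℂ) ζ‖)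

/-- The kernel on the closed disc by which the complete measure `λ` represents `C - u`: the Green
function divided by `1 - |ζ|` in the interior, continued by the Poisson kernel divided by `2π` on
the boundary circle. -/
noncomputable def martinKernel (z ζ : ℂ) : ℝ :=
  if ‖ζ‖ < 1 then discGreen z ζ / (1 - ‖ζ‖)
  else 1 / (2 * π) * ((1 - ‖z‖ ^ 2) / ‖ζ - z‖ ^ 2)

theorem measurable_martinKernel : Measurable fun q : ℂ × ℂ => martinKernel q.1 q.2 := by
  unfold martinKernel discGreen
  refine Measurable.ite (measurableSet_lt measurable_snd.norm measurable_const) ?_ ?_ <;> fun_prop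

theorem norm_one_sub_mul_conj_sq (z ζ : ℂ) : ‖1 - z * (starRingEnd ℂ) ζ‖ ^ 2 =
    ‖z - ζ‖ ^ 2 + (1 - ‖z‖ ^ 2) * (1 - ‖ζ‖ ^ 2) := by
  simp only [← normSq_eq_norm_sq, normSq_apply, sub_re, one_re, mul_re, conj_re, conj_im, sub_im,
    one_im, mul_im]
  ring

section Kernel

variable {z ζ : ℂ} {δ : ℝ}

theorem one_sub_norm_sq_pos (hz : ‖z‖ < 1) : 0 < 1 - ‖z‖ ^ 2 :=
  sub_pos.2 (pow_lt_one₀ (norm_nonneg z) hz two_ne_zero)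

theorem one_sub_norm_sq_le (z : ℂ) : 1 - ‖z‖ ^ 2 ≤ 2 * (1 - ‖z‖) := by
  nlinarith [sq_nonneg (1 - ‖z‖)]

theorem one_sub_norm_le_one_sub_norm_sq (hz : ‖z‖ ≤ 1) : 1 - ‖z‖ ≤ 1 - ‖z‖ ^ 2 := by
  nlinarith [norm_nonneg z]

theorem discGreen_eq_half_log (hne : z ≠ ζ) :
    discGreen z ζ =
      1 / 2 * Real.log (1 + (1 - ‖z‖ ^ 2) * (1 - ‖ζ‖ ^ 2) / ‖z - ζ‖ ^ 2) := by
  have hdist : 0 < ‖z - ζ‖ := norm_pos_iff.2 (sub_ne_zero.2 hne)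
  have hsq : 1 + (1 - ‖z‖ ^ 2) * (1 - ‖ζ‖ ^ 2) / ‖z - ζ‖ ^ 2 =
      ((‖z - ζ‖ / ‖1 - z * (starRingEnd ℂ) ζ‖)⁻¹) ^ 2 := by
    rw [inv_div, div_pow, norm_one_sub_mul_conj_sq, add_div, div_self (pow_pos hdist 2).ne']
  rw [hsq, Real.log_pow, Real.log_inv, discGreen]
  push_cast
  ring

theorem discGreen_nonneg (hz : ‖z‖ < 1) (hζ : ‖ζ‖ < 1) : 0 ≤ discGreen z ζ := by
  by_cases hne : z = ζ
  · simp [discGreen, hne]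
  · have hz' := one_sub_norm_sq_pos hz
    have hζ' := one_sub_norm_sq_pos hζ
    rw [discGreen_eq_half_log hne]
    exact mul_nonneg one_half_pos.le (Real.log_nonneg (le_add_of_nonneg_right (by positivity)))

theorem martinKernel_nonneg (hz : ‖z‖ < 1) : 0 ≤ martinKernel z ζ := by
  unfold martinKernel
  split_ifs with hζ
  · exact div_nonneg (discGreen_nonneg hz hζ) (sub_nonneg.2 hζ.le)
  · have := one_sub_norm_sq_pos hz
    positivity

theorem martinKernel_le (hz : ‖z‖ < 1) (hne : z ≠ ζ) :
    martinKernel z ζ ≤ 2 * (1 - ‖z‖) / ‖z - ζ‖ ^ 2 := by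
  have hdist : 0 < ‖z - ζ‖ := norm_pos_iff.2 (sub_ne_zero.2 hne)
  have hz' := one_sub_norm_sq_pos hz
  have hzle := one_sub_norm_sq_le z
  unfold martinKernel
  split_ifs with hζ
  · have hζ' := one_sub_norm_sq_pos hζ
    rw [div_le_iff₀ (sub_pos.2 hζ), discGreen_eq_half_log hne]
    calc 1 / 2 * Real.log (1 + (1 - ‖z‖ ^ 2) * (1 - ‖ζ‖ ^ 2) / ‖z - ζ‖ ^ 2)
        ≤ 1 / 2 * ((1 - ‖z‖ ^ 2) * (1 - ‖ζ‖ ^ 2) / ‖z - ζ‖ ^ 2) := by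
          gcongr
          linarith [Real.log_le_sub_one_of_pos
            (x := 1 + (1 - ‖z‖ ^ 2) * (1 - ‖ζ‖ ^ 2) / ‖z - ζ‖ ^ 2) (by positivity)]
      _ ≤ 1 / 2 * (2 * (1 - ‖z‖) * (2 * (1 - ‖ζ‖)) / ‖z - ζ‖ ^ 2) := by
          have hζle := one_sub_norm_sq_le ζ
          gcongr
      _ = 2 * (1 - ‖z‖) / ‖z - ζ‖ ^ 2 * (1 - ‖ζ‖) := by ring
  · have : 1 / (2 * π) ≤ 1 := (div_le_one (by positivity)).2 (by linarith [Real.pi_gt_three])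
    rw [norm_sub_rev ζ z, ← mul_div_assoc]
    exact div_le_div_of_nonneg_right ((mul_le_of_le_one_left hz'.le this).trans hzle) (sq_nonneg _)

theorem mul_martinKernel_le_log (hδ : 0 < δ) (hz : ‖z‖ = 1 - δ) (hζ₁ : δ / 2 ≤ 1 - ‖ζ‖)
    (hζ₂ : 1 - ‖ζ‖ ≤ 2 * δ) (hne : z ≠ ζ) :
    δ * martinKernel z ζ ≤ Real.log (1 + 8 * δ ^ 2 / ‖z - ζ‖ ^ 2) := by
  have hζ : ‖ζ‖ < 1 := by linarith
  have hz1 : ‖z‖ < 1 := by linarith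
  have hz' := one_sub_norm_sq_pos hz1
  have hζ' := one_sub_norm_sq_pos hζ
  have hratio : δ / (1 - ‖ζ‖) ≤ 2 := (div_le_iff₀ (by linarith)).2 (by linarith)
  have hprod : (1 - ‖z‖ ^ 2) * (1 - ‖ζ‖ ^ 2) ≤ 8 * δ ^ 2 := by
    have := mul_le_mul (one_sub_norm_sq_le z) (one_sub_norm_sq_le ζ) hζ'.le (by linarith)
    nlinarith
  calc δ * martinKernel z ζ = δ / (1 - ‖ζ‖) * discGreen z ζ := by
        rw [martinKernel, if_pos hζ]
        ring
    _ ≤ 2 * discGreen z ζ := by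
        gcongr
        exact discGreen_nonneg hz1 hζ
    _ = Real.log (1 + (1 - ‖z‖ ^ 2) * (1 - ‖ζ‖ ^ 2) / ‖z - ζ‖ ^ 2) := by
        rw [discGreen_eq_half_log hne]
        ring
    _ ≤ _ := by gcongr

theorem mul_martinKernel_le_eight (hδ : 0 < δ) (hz : ‖z‖ = 1 - δ) (hdist : δ / 2 ≤ ‖z - ζ‖) :
    δ * martinKernel z ζ ≤ 8 := by
  have hne : z ≠ ζ := sub_ne_zero.1 (norm_pos_iff.1 (by linarith))
  calc δ * martinKernel z ζ ≤ δ * (2 * (1 - ‖z‖) / ‖z - ζ‖ ^ 2) := by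
        gcongr
        exact martinKernel_le (by linarith) hne
    _ ≤ δ * (2 * (1 - ‖z‖) / (δ / 2) ^ 2) := by
        gcongr
        linarith
    _ = 8 := by
        rw [hz]
        field_simp
        ring

theorem mul_martinKernel_le_two_mul_log {y : ℝ} (hδ : 0 < δ) (hz : ‖z‖ = 1 - δ)
    (hζ₁ : δ / 2 ≤ 1 - ‖ζ‖) (hζ₂ : 1 - ‖ζ‖ ≤ 2 * δ) (hy : 0 < y) (hyδ : y ≤ 8 * δ)
    (hdist : y / π ≤ ‖z - ζ‖) :
    δ * martinKernel z ζ ≤ 2 * Real.log (16 * δ / y) := by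
  have hne : z ≠ ζ := sub_ne_zero.1 (norm_pos_iff.1 (lt_of_lt_of_le (by positivity) hdist))
  have hratio : 2 ≤ 16 * δ / y := (le_div_iff₀ hy).2 (by linarith)
  have hpi : π ^ 2 / 32 ≤ 1 / 2 := by nlinarith [Real.pi_lt_four, Real.pi_pos]
  calc δ * martinKernel z ζ ≤ Real.log (1 + 8 * δ ^ 2 / ‖z - ζ‖ ^ 2) :=
        mul_martinKernel_le_log hδ hz hζ₁ hζ₂ hne
    _ ≤ Real.log (1 + 8 * δ ^ 2 / (y / π) ^ 2) := by gcongr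
    _ = Real.log (1 + π ^ 2 / 32 * (16 * δ / y) ^ 2) := by
        congr 2
        field_simp
        ring
    _ ≤ Real.log ((16 * δ / y) ^ 2) := by
        gcongr
        nlinarith
    _ = 2 * Real.log (16 * δ / y) := by rw [Real.log_pow, Nat.cast_ofNat]

theorem one_div_le_martinKernel (hδ : 0 < δ) (hz : ‖z‖ = 1 - δ) (hζ : ‖ζ‖ ≤ 1)
    (hζδ : 1 - ‖ζ‖ ≤ δ) (hdist : ‖z - ζ‖ ≤ 5 * δ) (hne : z ≠ ζ) :
    1 / (200 * δ) ≤ martinKernel z ζ := by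
  have hpos : 0 < ‖z - ζ‖ := norm_pos_iff.2 (sub_ne_zero.2 hne)
  have hz1 : ‖z‖ < 1 := by linarith
  have hz_lower : δ ≤ 1 - ‖z‖ ^ 2 := by linarith [one_sub_norm_le_one_sub_norm_sq hz1.le]
  unfold martinKernel
  split_ifs with hζ1
  · set x := (1 - ‖z‖ ^ 2) * (1 - ‖ζ‖ ^ 2)
    have hx_lower : δ * (1 - ‖ζ‖) ≤ x :=
      mul_le_mul hz_lower (one_sub_norm_le_one_sub_norm_sq hζ) (by linarith) (by linarith)
    have hx_pos : 0 < x := mul_pos (one_sub_norm_sq_pos hz1) (one_sub_norm_sq_pos hζ1)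
    have hx_upper : x ≤ 4 * δ ^ 2 := by
      have := mul_le_mul (one_sub_norm_sq_le z) (one_sub_norm_sq_le ζ)
        (one_sub_norm_sq_pos hζ1).le (by linarith)
      nlinarith
    rw [discGreen_eq_half_log hne, le_div_iff₀ (by linarith)]
    calc 1 / (200 * δ) * (1 - ‖ζ‖) ≤ 1 / 2 * (δ * (1 - ‖ζ‖) / ((5 * δ) ^ 2 + 4 * δ ^ 2)) := by
          have : 1 / 2 * (δ * (1 - ‖ζ‖) / ((5 * δ) ^ 2 + 4 * δ ^ 2)) =
              1 / (58 * δ) * (1 - ‖ζ‖) := by field_simp; ring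
          rw [this]
          gcongr
          norm_num
      _ ≤ 1 / 2 * (x / (‖z - ζ‖ ^ 2 + x)) := by gcongr
      _ = 1 / 2 * (1 - (1 + x / ‖z - ζ‖ ^ 2)⁻¹) := by field_simp; ring
      _ ≤ 1 / 2 * Real.log (1 + x / ‖z - ζ‖ ^ 2) := by
          gcongr
          exact Real.one_sub_inv_le_log_of_pos (by positivity)
  · calc 1 / (200 * δ) = 1 / (2 * 4) * (δ / (5 * δ) ^ 2) := by field_simp; norm_num
      _ ≤ 1 / (2 * π) * ((1 - ‖z‖ ^ 2) / ‖ζ - z‖ ^ 2) := by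
          rw [norm_sub_rev ζ z]
          have hz' := one_sub_norm_sq_pos hz1
          gcongr
          exact Real.pi_lt_four.le

end Kernel

section LpNorm

variable {α β : Type*} [MeasurableSpace α] [MeasurableSpace β] {ν : Measure α} {p : ℝ}

theorem lintegral_rpow_eq_eLpNorm'_rpow (hp : 0 < p) (f : α → ℝ≥0∞) :
    ∫⁻ x, f x ^ p ∂ν = eLpNorm' f p ν ^ p := by
  simpa only [enorm_eq_self] using lintegral_rpow_enorm_eq_rpow_eLpNorm' (f := f) hp

theorem eLpNorm'_le_iff_lintegral_rpow_le (hp : 0 < p) {f : α → ℝ≥0∞} {M : ℝ≥0∞} :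
    eLpNorm' f p ν ≤ M ↔ ∫⁻ x, f x ^ p ∂ν ≤ M ^ p := by
  rw [lintegral_rpow_eq_eLpNorm'_rpow hp, ENNReal.rpow_le_rpow_iff hp]

theorem eLpNorm'_const_mul_le (c : ℝ≥0∞) {f : α → ℝ≥0∞} (hf : Measurable f) (hp : 0 < p) :
    eLpNorm' (fun x => c * f x) p ν ≤ c * eLpNorm' f p ν :=
  eLpNorm'_le_mul_eLpNorm'_of_ae_le_mul hf.aestronglyMeasurable (ae_of_all _ fun _ => le_rfl) hp

theorem lintegral_rpow_le_measure_univ_rpow_mul {f : α → ℝ≥0∞} (hf : Measurable f) (hp : 1 ≤ p) :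
    (∫⁻ x, f x ∂ν) ^ p ≤ ν univ ^ (p - 1) * ∫⁻ x, f x ^ p ∂ν := by
  have hp0 : 0 < p := by linarith
  have hHolder := eLpNorm'_le_eLpNorm'_mul_rpow_measure_univ one_pos hp
    hf.aestronglyMeasurable (μ := ν)
  simp only [eLpNorm', enorm_eq_self, ENNReal.rpow_one, div_one] at hHolder
  calc (∫⁻ x, f x ∂ν) ^ p
      ≤ ((∫⁻ x, f x ^ p ∂ν) ^ (1 / p) * ν univ ^ (1 - 1 / p)) ^ p := by gcongr
    _ = ν univ ^ (p - 1) * ∫⁻ x, f x ^ p ∂ν := by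
        rw [ENNReal.mul_rpow_of_nonneg _ _ hp0.le, ← ENNReal.rpow_mul, ← ENNReal.rpow_mul,
          one_div_mul_cancel hp0.ne', ENNReal.rpow_one, sub_mul, one_div_mul_cancel hp0.ne',
          one_mul, mul_comm]

theorem eLpNorm'_lintegral_le [SFinite ν] {lam : Measure β} [SFinite lam] {k : α → β → ℝ≥0∞}
    (hk : Measurable (Function.uncurry k)) (hp : 1 ≤ p) {M : ℝ≥0∞}
    (hM : ∀ᵐ y ∂lam, eLpNorm' (fun x => k x y) p ν ≤ M) :
    eLpNorm' (fun x => ∫⁻ y, k x y ∂lam) p ν ≤ lam univ * M := by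
  have hp0 : 0 < p := by linarith
  rw [eLpNorm'_le_iff_lintegral_rpow_le hp0]
  calc ∫⁻ x, (∫⁻ y, k x y ∂lam) ^ p ∂ν
      ≤ ∫⁻ x, lam univ ^ (p - 1) * ∫⁻ y, k x y ^ p ∂lam ∂ν :=
        lintegral_mono fun x =>
          lintegral_rpow_le_measure_univ_rpow_mul (hk.comp measurable_prodMk_left) hp
    _ = lam univ ^ (p - 1) * ∫⁻ y, ∫⁻ x, k x y ^ p ∂ν ∂lam := by
        have hkp : Measurable (Function.uncurry fun x y => k x y ^ p) := hk.pow_const p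
        rw [lintegral_const_mul _ hkp.lintegral_prod_right,
          lintegral_lintegral_swap hkp.aemeasurable]
    _ ≤ lam univ ^ (p - 1) * ∫⁻ _, M ^ p ∂lam := by
        gcongr _ * ?_
        exact lintegral_mono_ae (hM.mono fun y => (eLpNorm'_le_iff_lintegral_rpow_le hp0).1)
    _ = (lam univ * M) ^ p := by
        rw [lintegral_const, ENNReal.mul_rpow_of_nonneg _ _ hp0.le, mul_comm (M ^ p), ← mul_assoc]
        nth_rw 2 [← ENNReal.rpow_one (lam univ)]
        rw [← ENNReal.rpow_add_of_nonneg _ _ (by linarith) zero_le_one, sub_add_cancel]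

theorem eLpNorm'_tsum_le {f : ℕ → α → ℝ≥0∞} (hf : ∀ n, Measurable (f n)) (hp : 1 ≤ p) :
    eLpNorm' (fun x => ∑' n, f n x) p ν ≤ ∑' n, eLpNorm' (f n) p ν := by
  have hp0 : 0 < p := by linarith
  have hmono : Monotone fun N x => (∑ n ∈ Finset.range N, f n x) ^ p := fun M N hMN x =>
    ENNReal.rpow_le_rpow (Finset.sum_le_sum_of_subset (Finset.range_mono hMN)) hp0.le
  have hiSup : ∫⁻ x, (∑' n, f n x) ^ p ∂ν = ⨆ N, ∫⁻ x, (∑ n ∈ Finset.range N, f n x) ^ p ∂ν := by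
    rw [← lintegral_iSup (fun N => (Finset.measurable_fun_sum _ fun n _ => hf n).pow_const p) hmono]
    refine lintegral_congr fun x => ?_
    rw [ENNReal.tsum_eq_iSup_nat]
    exact (ENNReal.orderIsoRpow p hp0).map_iSup _
  rw [eLpNorm'_le_iff_lintegral_rpow_le hp0, hiSup]
  refine iSup_le fun N => (eLpNorm'_le_iff_lintegral_rpow_le hp0).1 ?_
  calc eLpNorm' (fun x => ∑ n ∈ Finset.range N, f n x) p ν
      = eLpNorm' (∑ n ∈ Finset.range N, f n) p ν := by simp only [Finset.sum_fn]
    _ ≤ ∑ n ∈ Finset.range N, eLpNorm' (f n) p ν :=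
        eLpNorm'_sum_le (fun n _ => (hf n).aestronglyMeasurable) hp
    _ ≤ ∑' n, eLpNorm' (f n) p ν := ENNReal.sum_le_tsum _

theorem setLIntegral_Ioc_add_right_of_periodic {f : ℝ → ℝ≥0∞} {T : ℝ} (hT : 0 < T)
    (hf : Function.Periodic f T) (t s : ℝ) :
    ∫⁻ x in Ioc t (t + T), f (x + s) = ∫⁻ x in Ioc t (t + T), f x := by
  have hpre : (· + s) ⁻¹' Ioc (t + s) (t + s + T) = Ioc t (t + T) := by
    rw [preimage_add_const_Ioc, add_sub_cancel_right, add_right_comm, add_sub_cancel_right]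
  calc ∫⁻ x in Ioc t (t + T), f (x + s) = ∫⁻ x in Ioc (t + s) (t + s + T), f x := by
        rw [← hpre]
        exact (measurePreserving_add_right volume s).setLIntegral_comp_preimage_emb
          (measurableEmbedding_addRight s) f _
    _ = ∫⁻ x in Ioc t (t + T), f x :=
        (isAddFundamentalDomain_Ioc hT _).setLIntegral_eq (isAddFundamentalDomain_Ioc hT t) f
          hf.map_vadd_zmultiples

theorem eLpNorm'_le_of_translates_le {F G : ℝ → ℝ≥0∞} (hF : Measurable F) {T : ℝ} (hT : 0 < T)
    (hper : Function.Periodic F T) (hp : 0 < p) {η : Measure ℝ} [IsFiniteMeasure η] [NeZero η]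
    (hFG : ∀ x, eLpNorm' (fun s => F (x + s)) p η ≤ G x * η univ ^ (1 / p)) (t : ℝ) :
    eLpNorm' F p (volume.restrict (Ioc t (t + T))) ≤
      eLpNorm' G p (volume.restrict (Ioc t (t + T))) := by
  have haverage : ∫⁻ x in Ioc t (t + T), ∫⁻ s, F (x + s) ^ p ∂η =
      η univ * ∫⁻ x in Ioc t (t + T), F x ^ p := by
    have hperp : Function.Periodic (fun x => F x ^ p) T := hper.comp (· ^ p)
    rw [lintegral_lintegral_swap (by fun_prop)]
    simp only [setLIntegral_Ioc_add_right_of_periodic hT hperp, lintegral_const, mul_comm]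
  rw [eLpNorm'_le_iff_lintegral_rpow_le hp, ← lintegral_rpow_eq_eLpNorm'_rpow hp,
    ← ENNReal.mul_le_mul_iff_right (Measure.measure_univ_ne_zero.2 (NeZero.ne η))
      (measure_ne_top η univ), ← haverage,
    ← lintegral_const_mul' _ _ (measure_ne_top η univ)]
  refine lintegral_mono fun x => ?_
  calc ∫⁻ s, F (x + s) ^ p ∂η ≤ (G x * η univ ^ (1 / p)) ^ p :=
        (eLpNorm'_le_iff_lintegral_rpow_le hp).1 (hFG x)
    _ = η univ * G x ^ p := by
        rw [ENNReal.mul_rpow_of_nonneg _ _ hp.le, ← ENNReal.rpow_mul, one_div_mul_cancel hp.ne',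
          ENNReal.rpow_one, mul_comm]

theorem toReal_eLpNorm'_eq_integral {ε : Type*} [TopologicalSpace ε] [ContinuousENorm ε] {f : α → ε}
    (hf : AEStronglyMeasurable f ν) (hfin : ∀ᵐ x ∂ν, ‖f x‖ₑ < ∞) (hp : 0 ≤ p) :
    (eLpNorm' f p ν).toReal = (∫ x, ‖f x‖ₑ.toReal ^ p ∂ν) ^ (1 / p) := by
  have hpow : ∀ᵐ x ∂ν, ‖f x‖ₑ ^ p < ∞ := by
    filter_upwards [hfin] with x hx using ENNReal.rpow_lt_top_of_nonneg hp hx.ne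
  simp only [eLpNorm'_eq_lintegral_enorm, ← ENNReal.toReal_rpow,
    ← integral_toReal (hf.enorm.pow_const p) hpow]

theorem eLpNorm'_le_const_add_eLpNorm' {ε F : Type*} [TopologicalSpace ε] [ContinuousENorm ε]
    [ENorm F] {f : α → F} {g : α → ε} {c : ℝ≥0∞} (hg : AEStronglyMeasurable g ν) (hp : 1 ≤ p)
    (hfg : ∀ᵐ x ∂ν, ‖f x‖ₑ ≤ c + ‖g x‖ₑ) :
    eLpNorm' f p ν ≤ c * ν univ ^ (1 / p) + eLpNorm' g p ν := by
  have hp0 : 0 < p := by linarith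
  calc eLpNorm' f p ν ≤ eLpNorm' ((fun _ => c) + fun x => ‖g x‖ₑ) p ν :=
        eLpNorm'_mono_enorm_ae hp0.le hfg
    _ ≤ eLpNorm' (fun _ => c) p ν + eLpNorm' (fun x => ‖g x‖ₑ) p ν :=
        eLpNorm'_add_le aestronglyMeasurable_const hg.enorm.aestronglyMeasurable hp
    _ = c * ν univ ^ (1 / p) + eLpNorm' g p ν := by
        rw [eLpNorm'_const _ hp0, enorm_eq_self]
        rfl

theorem ae_lt_top_of_eLpNorm'_ne_top {g : α → ℝ≥0∞} (hg : Measurable g) (hp : 0 < p)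
    (hfin : eLpNorm' g p ν ≠ ∞) : ∀ᵐ x ∂ν, g x < ∞ := by
  have hpow : ∫⁻ x, g x ^ p ∂ν ≠ ∞ := by
    rw [lintegral_rpow_eq_eLpNorm'_rpow hp]
    exact ENNReal.rpow_ne_top_of_nonneg hp.le hfin
  filter_upwards [ae_lt_top (hg.pow_const p) hpow] with x hx
    using (ENNReal.rpow_lt_top_iff_of_pos hp).1 hx

theorem abs_toReal_eLpNorm'_sub_le [IsFiniteMeasure ν] {g : α → ℝ≥0∞} {h : α → ℝ} {c : ℝ}
    (hg : Measurable g) (hp : 1 ≤ p) (hfin : eLpNorm' g p ν ≠ ∞)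
    (hhg : h =ᵐ[ν] fun x => c - (g x).toReal) :
    |(eLpNorm' h p ν).toReal - (eLpNorm' g p ν).toReal| ≤ |c| * ν.real univ ^ (1 / p) := by
  have hnorm : ∀ᵐ x ∂ν, ‖g x‖ₑ = ‖(g x).toReal‖ₑ := by
    filter_upwards [ae_lt_top_of_eLpNorm'_ne_top hg (by linarith) hfin] with x hx
    rw [enorm_eq_self, Real.enorm_of_nonneg ENNReal.toReal_nonneg, ENNReal.ofReal_toReal hx.ne]
  have hle : eLpNorm' h p ν ≤ ‖c‖ₑ * ν univ ^ (1 / p) + eLpNorm' g p ν := by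
    refine eLpNorm'_le_const_add_eLpNorm' hg.aestronglyMeasurable hp ?_
    filter_upwards [hhg, hnorm] with x hhx hgx
    rw [hhx, hgx]
    exact enorm_sub_le
  have hge : eLpNorm' g p ν ≤ ‖c‖ₑ * ν univ ^ (1 / p) + eLpNorm' h p ν := by
    refine eLpNorm'_le_const_add_eLpNorm'
      ((hg.ennreal_toReal.const_sub c).aestronglyMeasurable.congr hhg.symm) hp ?_
    filter_upwards [hhg, hnorm] with x hhx hgx
    rw [hgx, show (g x).toReal = c - h x by rw [hhx, sub_sub_cancel]]
    exact enorm_sub_le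
  have hconst : ‖c‖ₑ * ν univ ^ (1 / p) ≠ ∞ := by finiteness
  have hfin' : eLpNorm' h p ν ≠ ∞ := ne_top_of_le_ne_top (ENNReal.add_ne_top.2 ⟨hconst, hfin⟩) hle
  have hconst_toReal : (‖c‖ₑ * ν univ ^ (1 / p)).toReal = |c| * ν.real univ ^ (1 / p) := by
    rw [ENNReal.toReal_mul, toReal_enorm, Real.norm_eq_abs, ← ENNReal.toReal_rpow, Measure.real]
  rw [← hconst_toReal, abs_sub_le_iff, sub_le_iff_le_add, sub_le_iff_le_add]
  exact ⟨ENNReal.toReal_le_add hle hconst hfin, ENNReal.toReal_le_add hge hconst hfin'⟩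

end LpNorm

theorem intervalIntegrable_abs_rpow {s : ℝ} (hs : -1 < s) (a b : ℝ) :
    IntervalIntegrable (fun x : ℝ => |x| ^ s) volume a b := by
  refine intervalIntegrable_of_even (fun x => by rw [abs_neg]) fun x hx => ?_
  refine (intervalIntegral.intervalIntegrable_rpow' hs).congr fun y hy => ?_
  rw [uIoc_of_le hx.le] at hy
  simp only [abs_of_pos hy.1]

theorem integral_abs_rpow_neg_self {s a : ℝ} (hs : -1 < s) (ha : 0 ≤ a) :
    ∫ x in -a..a, |x| ^ s = 2 * (a ^ (s + 1) / (s + 1)) := by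
  have right_half : ∫ x in (0 : ℝ)..a, |x| ^ s = a ^ (s + 1) / (s + 1) := by
    calc ∫ x in (0 : ℝ)..a, |x| ^ s = ∫ x in (0 : ℝ)..a, x ^ s := by
          refine intervalIntegral.integral_congr fun x hx => ?_
          simp only [abs_of_nonneg (uIcc_of_le ha ▸ hx).1]
      _ = a ^ (s + 1) / (s + 1) := by
          rw [integral_rpow (Or.inl hs), Real.zero_rpow (by linarith), sub_zero]
  have left_half : ∫ x in -a..0, |x| ^ s = ∫ x in (0 : ℝ)..a, |x| ^ s := by
    simpa only [abs_neg, neg_zero] using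
      (intervalIntegral.integral_comp_neg (a := 0) (b := a) fun x : ℝ => |x| ^ s).symm
  rw [← intervalIntegral.integral_add_adjacent_intervals (intervalIntegrable_abs_rpow hs _ 0)
    (intervalIntegrable_abs_rpow hs 0 _), left_half, right_half, two_mul]

theorem setLIntegral_abs_sub_rpow_le {s a : ℝ} (hs : -1 < s) (ha : 0 ≤ a) {β : ℝ} {S : Set ℝ}
    (hS : ∀ x ∈ S, |x - β| ≤ a) :
    ∫⁻ x in S, ENNReal.ofReal (|x - β| ^ s) ≤ ENNReal.ofReal (2 * (a ^ (s + 1) / (s + 1))) := by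
  have hle : -a ≤ a := by linarith
  calc ∫⁻ x in S, ENNReal.ofReal (|x - β| ^ s)
      ≤ ∫⁻ x in (· - β) ⁻¹' Icc (-a) a, ENNReal.ofReal (|x - β| ^ s) :=
        lintegral_mono_set fun x hx => abs_le.1 (hS x hx)
    _ = ∫⁻ x in Icc (-a) a, ENNReal.ofReal (|x| ^ s) :=
        (measurePreserving_sub_right volume β).setLIntegral_comp_preimage measurableSet_Icc
          (f := fun x => ENNReal.ofReal (|x| ^ s)) (by fun_prop)
    _ = ENNReal.ofReal (2 * (a ^ (s + 1) / (s + 1))) := by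
        rw [setLIntegral_congr Ioc_ae_eq_Icc.symm, ← ofReal_integral_eq_lintegral_ofReal
          ((intervalIntegrable_iff_integrableOn_Ioc_of_le hle).1
            (intervalIntegrable_abs_rpow hs _ _))
          (Eventually.of_forall fun x => by positivity),
          ← intervalIntegral.integral_of_le hle, integral_abs_rpow_neg_self hs ha]

section CircleKernel

variable {δ t φ s : ℝ} {ζ : ℂ}

theorem norm_circleMap_one_sub (hδ : δ ≤ 1) (φ : ℝ) : ‖circleMap 0 (1 - δ) φ‖ = 1 - δ := by
  rw [norm_circleMap_zero, abs_of_nonneg (sub_nonneg.2 hδ)]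

theorem le_norm_circleMap_sub_of_notMem_carlesonBox (hδ : 0 < δ) (hδ1 : δ ≤ 1 / 8)
    (ht : 2 * δ ≤ t) (hs : |s| ≤ δ) (hζ : ‖ζ‖ ≤ 1) (h : ζ ∉ carlesonBox φ t) :
    t / 4 ≤ ‖circleMap 0 (1 - δ) (φ + s) - ζ‖ := by
  have ht1 : t < 1 := by
    contrapose! h
    rwa [carlesonBox_eq_closedBall h, mem_closedBall_zero_iff]
  have hradial := norm_sub_norm_le (circleMap 0 (1 - δ) (φ + s)) ζ
  rw [norm_circleMap_one_sub (by linarith)] at hradial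
  by_cases hζt : 1 - t ≤ ‖ζ‖ ∧ 1 / 2 ≤ ‖ζ‖
  · obtain ⟨hζt, hζ2⟩ := hζt
    set β := angleFrom (φ + s) ζ
    have hζβ : circleMap 0 ‖ζ‖ (φ + s + β) = ζ := circleMap_norm_add_angleFrom _ _
    have hβ : π * t < |β| + |s| := by
      by_contra! hle
      refine h (mem_carlesonBox_iff.2 ⟨hζ, hζt, ?_⟩)
      calc |angleFrom φ ζ| ≤ |φ + s + β - φ| := by
            conv_lhs => rw [← hζβ]
            exact abs_angleFrom_circleMap_le (norm_nonneg ζ) φ _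
        _ = |β + s| := by ring_nf
        _ ≤ _ := (abs_add_le β s).trans hle
    have hchord := abs_sub_div_pi_le_norm_circleMap_sub (r := 1 - δ) (ρ := ‖ζ‖) (a := φ + s)
      (b := φ + s + β) (by linarith) hζ2 (by simpa using abs_angleFrom_le_pi (φ + s) ζ)
    rw [hζβ, sub_add_cancel_left, abs_neg] at hchord
    refine le_trans ?_ hchord
    rw [le_div_iff₀ Real.pi_pos]
    nlinarith [Real.pi_gt_three]
  · rw [not_and_or, not_le, not_le] at hζt
    rcases hζt with hζt | hζ2 <;> linarith

theorem martinKernel_circleMap_le_of_notMem_carlesonBox (hδ : 0 < δ) (hδ1 : δ ≤ 1 / 8)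
    (ht : 2 * δ ≤ t) (hs : |s| ≤ δ) (hζ : ‖ζ‖ ≤ 1) (h : ζ ∉ carlesonBox φ t) :
    martinKernel (circleMap 0 (1 - δ) (φ + s)) ζ ≤ 32 * δ / t ^ 2 := by
  have hdist := le_norm_circleMap_sub_of_notMem_carlesonBox hδ hδ1 ht hs hζ h
  have hz : ‖circleMap 0 (1 - δ) (φ + s)‖ = 1 - δ := norm_circleMap_one_sub (by linarith) _
  have ht0 : 0 < t := by linarith
  have hpos : 0 < ‖circleMap 0 (1 - δ) (φ + s) - ζ‖ := by linarith
  calc martinKernel (circleMap 0 (1 - δ) (φ + s)) ζ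
      ≤ 2 * (1 - (1 - δ)) / ‖circleMap 0 (1 - δ) (φ + s) - ζ‖ ^ 2 := by
        have := martinKernel_le (ζ := ζ) (by linarith) (sub_ne_zero.1 (norm_pos_iff.1 hpos))
        rwa [hz] at this
    _ ≤ 2 * (1 - (1 - δ)) / (t / 4) ^ 2 := by
        gcongr
        linarith
    _ = 32 * δ / t ^ 2 := by ring

theorem one_div_le_martinKernel_circleMap (hδ : 0 < δ) (hδ1 : δ ≤ 1) (h : ζ ∈ carlesonBox φ δ)
    (hne : circleMap 0 (1 - δ) φ ≠ ζ) :
    1 / (200 * δ) ≤ martinKernel (circleMap 0 (1 - δ) φ) ζ := by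
  obtain ⟨hζ, hζδ, hangle⟩ := mem_carlesonBox_iff.1 h
  refine one_div_le_martinKernel hδ (norm_circleMap_one_sub hδ1 φ) hζ (by linarith) ?_ hne
  have hchord := norm_circleMap_sub_circleMap_le (1 - δ) ‖ζ‖ φ (φ + angleFrom φ ζ)
  rw [circleMap_norm_add_angleFrom, sub_add_cancel_left, abs_neg, abs_norm] at hchord
  have hradial : |1 - δ - ‖ζ‖| ≤ δ := abs_le.2 ⟨by linarith, by linarith⟩
  have hangular : ‖ζ‖ * |angleFrom φ ζ| ≤ 4 * δ :=
    (mul_le_of_le_one_left (abs_nonneg _) hζ).trans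
      (hangle.trans (mul_le_mul_of_nonneg_right Real.pi_lt_four.le hδ.le))
  linarith

theorem abs_sub_angleFrom_le (hs : |s| ≤ δ) (h : ζ ∈ carlesonBox φ (2 * δ)) :
    |s - angleFrom φ ζ| ≤ 8 * δ := by
  have hangle := (mem_carlesonBox_iff.1 h).2.2
  nlinarith [abs_sub s (angleFrom φ ζ), abs_nonneg s, Real.pi_lt_d2]

/- The logarithmic singularity is weakened to the power `-1 / (2p)`, whose `p`-th power
`|s|^(-1 / 2)` is integrable for every `p`. -/
theorem mul_martinKernel_circleMap_le_rpow {p : ℝ} (hp : 1 ≤ p) (hδ : 0 < δ) (hδ1 : δ ≤ 1 / 8)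
    (hs : |s| ≤ δ) (h : ζ ∈ carlesonBox φ (2 * δ)) (hne : s ≠ angleFrom φ ζ) :
    δ * martinKernel (circleMap 0 (1 - δ) (φ + s)) ζ ≤
      8 * p * (16 * δ / |s - angleFrom φ ζ|) ^ (1 / (2 * p)) := by
  obtain ⟨-, hζδ, -⟩ := mem_carlesonBox_iff.1 h
  have hyδ := abs_sub_angleFrom_le hs h
  set y := |s - angleFrom φ ζ|
  have hy : 0 < y := abs_pos.2 (sub_ne_zero.2 hne)
  set z := circleMap 0 (1 - δ) (φ + s)
  have hz : ‖z‖ = 1 - δ := norm_circleMap_one_sub (by linarith) _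
  rcases lt_or_ge (1 - ‖ζ‖) (δ / 2) with hclose | hfar
  · have hratio : 1 ≤ 16 * δ / y := (one_le_div hy).2 (by linarith)
    calc δ * martinKernel z ζ ≤ 8 :=
          mul_martinKernel_le_eight hδ hz (by linarith [norm_sub_norm_le ζ z, norm_sub_rev z ζ])
      _ = 8 * 1 * 1 := by norm_num
      _ ≤ 8 * p * (16 * δ / y) ^ (1 / (2 * p)) := by
          gcongr
          exact Real.one_le_rpow hratio (by positivity)
  · have hchord : y / π ≤ ‖z - ζ‖ := by
      have := abs_sub_div_pi_le_norm_circleMap_sub (r := 1 - δ) (ρ := ‖ζ‖) (a := φ + s)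
        (b := φ + angleFrom φ ζ) (by linarith) (by linarith)
        (by rw [add_sub_add_left_eq_sub]; linarith [Real.pi_gt_three])
      rwa [circleMap_norm_add_angleFrom, add_sub_add_left_eq_sub] at this
    calc δ * martinKernel z ζ ≤ 2 * Real.log (16 * δ / y) :=
          mul_martinKernel_le_two_mul_log hδ hz hfar (by linarith) hy hyδ hchord
      _ ≤ 2 * ((16 * δ / y) ^ (1 / (2 * p)) / (1 / (2 * p))) := by
          gcongr
          exact Real.log_le_rpow_div (by positivity) (by positivity)
      _ = 4 * p * (16 * δ / y) ^ (1 / (2 * p)) := by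
          field_simp
          norm_num
      _ ≤ 8 * p * (16 * δ / y) ^ (1 / (2 * p)) := by
          gcongr
          norm_num

theorem ofReal_martinKernel_circleMap_rpow_le {p : ℝ} (hp : 1 ≤ p) (hδ : 0 < δ) (hδ1 : δ ≤ 1 / 8)
    (hs : |s| ≤ δ) (h : ζ ∈ carlesonBox φ (2 * δ)) (hne : s ≠ angleFrom φ ζ) :
    ENNReal.ofReal (martinKernel (circleMap 0 (1 - δ) (φ + s)) ζ) ^ p ≤
      ENNReal.ofReal ((8 * p / δ) ^ p * √(16 * δ)) *
        ENNReal.ofReal (|s - angleFrom φ ζ| ^ (-(1 / 2) : ℝ)) := by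
  have hK := mul_martinKernel_circleMap_le_rpow hp hδ hδ1 hs h hne
  have hy : 0 < |s - angleFrom φ ζ| := abs_pos.2 (sub_ne_zero.2 hne)
  set y := |s - angleFrom φ ζ|
  have hK0 : 0 ≤ martinKernel (circleMap 0 (1 - δ) (φ + s)) ζ :=
    martinKernel_nonneg (by rw [norm_circleMap_one_sub (by linarith)]; linarith)
  rw [ENNReal.ofReal_rpow_of_nonneg hK0 (by linarith), ← ENNReal.ofReal_mul (by positivity)]
  refine ENNReal.ofReal_le_ofReal ?_
  calc martinKernel (circleMap 0 (1 - δ) (φ + s)) ζ ^ p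
      ≤ (8 * p / δ * (16 * δ / y) ^ (1 / (2 * p))) ^ p := by
        gcongr
        rwa [div_mul_eq_mul_div, le_div_iff₀ hδ, mul_comm]
    _ = (8 * p / δ) ^ p * (16 * δ / y) ^ (1 / 2 : ℝ) := by
        rw [Real.mul_rpow (by positivity) (by positivity), ← Real.rpow_mul (by positivity)]
        congr 2
        field_simp
    _ = (8 * p / δ) ^ p * √(16 * δ) * y ^ (-(1 / 2) : ℝ) := by
        rw [Real.div_rpow (by positivity) hy.le, ← Real.sqrt_eq_rpow (16 * δ), Real.rpow_neg hy.le,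
          div_eq_mul_inv (√(16 * δ)), mul_assoc]

theorem rpow_mul_sqrt_mul_sqrt_le {p : ℝ} (hp : 1 ≤ p) (hδ : 0 < δ) :
    (8 * p / δ) ^ p * √(16 * δ) * (4 * √(8 * δ)) ≤ (192 * p / δ) ^ p * (2 * δ) := by
  have hsqrt : √(16 * δ) * √(8 * δ) ≤ 12 * δ := by
    rw [← Real.sqrt_mul (by positivity)]
    exact Real.sqrt_le_iff.2 ⟨by positivity, by nlinarith⟩
  have hpow : (24 : ℝ) ≤ 24 ^ p := Real.self_le_rpow_of_one_le (by norm_num) hp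
  calc (8 * p / δ) ^ p * √(16 * δ) * (4 * √(8 * δ))
      = (8 * p / δ) ^ p * (4 * (√(16 * δ) * √(8 * δ))) := by ring
    _ ≤ (8 * p / δ) ^ p * (24 ^ p * (2 * δ)) :=
        mul_le_mul_of_nonneg_left (by nlinarith) (by positivity)
    _ = (192 * p / δ) ^ p * (2 * δ) := by
        rw [← mul_assoc, ← Real.mul_rpow (by positivity) (by positivity)]
        ring_nf

theorem eLpNorm'_martinKernel_circleMap_le {p : ℝ} (hp : 1 ≤ p) (hδ : 0 < δ) (hδ1 : δ ≤ 1 / 8)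
    (h : ζ ∈ carlesonBox φ (2 * δ)) :
    eLpNorm' (fun s => ENNReal.ofReal (martinKernel (circleMap 0 (1 - δ) (φ + s)) ζ)) p
        (volume.restrict (Icc (-δ) δ)) ≤
      ENNReal.ofReal (192 * p / δ) * ENNReal.ofReal (2 * δ) ^ (1 / p) := by
  have hp0 : 0 < p := by linarith
  have hsing : ∫⁻ s in Icc (-δ) δ, ENNReal.ofReal (|s - angleFrom φ ζ| ^ (-(1 / 2) : ℝ)) ≤
      ENNReal.ofReal (4 * √(8 * δ)) := by
    refine (setLIntegral_abs_sub_rpow_le (a := 8 * δ) (by norm_num) (by positivity)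
      fun s hs => abs_sub_angleFrom_le (abs_le.2 hs) h).trans_eq ?_
    rw [Real.sqrt_eq_rpow]
    ring_nf
  rw [eLpNorm'_le_iff_lintegral_rpow_le hp0]
  calc ∫⁻ s in Icc (-δ) δ, ENNReal.ofReal (martinKernel (circleMap 0 (1 - δ) (φ + s)) ζ) ^ p
      ≤ ENNReal.ofReal ((8 * p / δ) ^ p * √(16 * δ)) *
          ∫⁻ s in Icc (-δ) δ, ENNReal.ofReal (|s - angleFrom φ ζ| ^ (-(1 / 2) : ℝ)) := by
        rw [← lintegral_const_mul' _ _ ENNReal.ofReal_ne_top]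
        refine lintegral_mono_ae ?_
        filter_upwards [ae_restrict_mem measurableSet_Icc,
          ae_restrict_of_ae (Measure.ae_ne volume (angleFrom φ ζ))] with s hs hne
        exact ofReal_martinKernel_circleMap_rpow_le hp hδ hδ1 (abs_le.2 hs) h hne
    _ ≤ ENNReal.ofReal ((8 * p / δ) ^ p * √(16 * δ)) * ENNReal.ofReal (4 * √(8 * δ)) := by gcongr
    _ ≤ ENNReal.ofReal ((192 * p / δ) ^ p * (2 * δ)) := by
        rw [← ENNReal.ofReal_mul (by positivity)]
        exact ENNReal.ofReal_le_ofReal (rpow_mul_sqrt_mul_sqrt_le hp hδ)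
    _ = (ENNReal.ofReal (192 * p / δ) * ENNReal.ofReal (2 * δ) ^ (1 / p)) ^ p := by
        rw [ENNReal.mul_rpow_of_nonneg _ _ hp0.le, ← ENNReal.rpow_mul, one_div_mul_cancel hp0.ne',
          ENNReal.rpow_one, ENNReal.ofReal_rpow_of_nonneg (by positivity) hp0.le,
          ← ENNReal.ofReal_mul (by positivity)]

theorem ofReal_martinKernel_circleMap_le_tsum (hδ : 0 < δ) (hδ1 : δ ≤ 1 / 8) (hs : |s| ≤ δ)
    (hζ : ‖ζ‖ ≤ 1) (h : ζ ∉ carlesonBox φ (2 * δ)) :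
    ENNReal.ofReal (martinKernel (circleMap 0 (1 - δ) (φ + s)) ζ) ≤
      ∑' n : ℕ, (carlesonBox φ (2 ^ (n + 1) * δ)).indicator
        (fun _ => ENNReal.ofReal (32 / δ) * 4⁻¹ ^ n) ζ := by
  classical
  have hex : ∃ n : ℕ, ζ ∈ carlesonBox φ (2 ^ (n + 1) * δ) := by
    obtain ⟨n, hn⟩ := pow_unbounded_of_one_lt (1 / δ) one_lt_two
    rw [div_lt_iff₀ hδ] at hn
    refine ⟨n, ?_⟩
    rw [carlesonBox_eq_closedBall (by rw [pow_succ]; linarith)]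
    exact mem_closedBall_zero_iff.2 hζ
  obtain ⟨m, hm⟩ : ∃ m, Nat.find hex = m + 1 := by
    refine Nat.exists_eq_succ_of_ne_zero fun h0 => h ?_
    simpa [h0] using Nat.find_spec hex
  have hmem : ζ ∈ carlesonBox φ (2 ^ (m + 1 + 1) * δ) := hm ▸ Nat.find_spec hex
  have hnotMem : ζ ∉ carlesonBox φ (2 ^ (m + 1) * δ) :=
    Nat.find_min hex (hm ▸ Nat.lt_succ_self m)
  have hscale : 2 * δ ≤ 2 ^ (m + 1) * δ := by
    gcongr
    exact le_self_pow₀ one_le_two (Nat.succ_ne_zero m)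
  calc ENNReal.ofReal (martinKernel (circleMap 0 (1 - δ) (φ + s)) ζ)
      ≤ ENNReal.ofReal (32 * δ / (2 ^ (m + 1) * δ) ^ 2) := ENNReal.ofReal_le_ofReal
        (martinKernel_circleMap_le_of_notMem_carlesonBox hδ hδ1 hscale hs hζ hnotMem)
    _ = ENNReal.ofReal (32 / δ * 4⁻¹ ^ (m + 1)) := by
        congr 1
        rw [mul_pow, ← pow_mul, mul_comm (m + 1), pow_mul, inv_pow]
        field_simp
        norm_num
    _ = ENNReal.ofReal (32 / δ) * 4⁻¹ ^ (m + 1) := by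
        rw [ENNReal.ofReal_mul (by positivity), ENNReal.ofReal_pow (by norm_num),
          ENNReal.ofReal_inv_of_pos (by norm_num), ENNReal.ofReal_ofNat]
    _ ≤ _ := by
        rw [← indicator_of_mem hmem fun _ => ENNReal.ofReal (32 / δ) * 4⁻¹ ^ (m + 1)]
        exact ENNReal.le_tsum (m + 1)

end CircleKernel

section Potential

variable {lam : Measure ℂ} {p δ φ s : ℝ}

/-- The potential of the measure `lam` on the closed disc with respect to the kernel
`martinKernel`; for the complete measure of `u` it is `C - u`. -/
noncomputable def martinPotential (lam : Measure ℂ) (z : ℂ) : ℝ≥0∞ :=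
  ∫⁻ ζ, ENNReal.ofReal (martinKernel z ζ) ∂lam

theorem measurable_martinPotential [SFinite lam] : Measurable (martinPotential lam) :=
  measurable_martinKernel.ennreal_ofReal.lintegral_prod_right'

/-- The sum of the masses of the Carleson boxes of sizes `2δ, 4δ, 8δ, …` in direction `φ`, weighted
by the decay of the kernel off these boxes. -/
noncomputable def dyadicBoxSum (lam : Measure ℂ) (δ φ : ℝ) : ℝ≥0∞ :=
  ∑' n : ℕ, 4⁻¹ ^ n * lam (carlesonBox φ (2 ^ (n + 1) * δ))

theorem measure_carlesonBox_le_dyadicBoxSum (lam : Measure ℂ) (δ φ : ℝ) :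
    lam (carlesonBox φ (2 * δ)) ≤ dyadicBoxSum lam δ φ := by
  simpa [dyadicBoxSum] using
    ENNReal.le_tsum (f := fun n : ℕ => 4⁻¹ ^ n * lam (carlesonBox φ (2 ^ (n + 1) * δ))) 0

theorem martinPotential_circleMap_le (hlam : ∀ᵐ ζ ∂lam, ‖ζ‖ ≤ 1) (hδ : 0 < δ) (hδ1 : δ ≤ 1 / 8)
    (hs : |s| ≤ δ) :
    martinPotential lam (circleMap 0 (1 - δ) (φ + s)) ≤
      (∫⁻ ζ in carlesonBox φ (2 * δ),
        ENNReal.ofReal (martinKernel (circleMap 0 (1 - δ) (φ + s)) ζ) ∂lam) +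
      ENNReal.ofReal (32 / δ) * dyadicBoxSum lam δ φ := by
  have hbox := measurableSet_carlesonBox φ
  set z := circleMap 0 (1 - δ) (φ + s)
  have hsplit : ∀ᵐ ζ ∂lam, ENNReal.ofReal (martinKernel z ζ) ≤
      (carlesonBox φ (2 * δ)).indicator (fun ζ => ENNReal.ofReal (martinKernel z ζ)) ζ +
        ∑' n : ℕ, (carlesonBox φ (2 ^ (n + 1) * δ)).indicator
          (fun _ => ENNReal.ofReal (32 / δ) * 4⁻¹ ^ n) ζ := by
    filter_upwards [hlam] with ζ hζ
    by_cases h : ζ ∈ carlesonBox φ (2 * δ)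
    · rw [indicator_of_mem h]
      exact le_self_add
    · rw [indicator_of_notMem h, zero_add]
      exact ofReal_martinKernel_circleMap_le_tsum hδ hδ1 hs hζ h
  refine (lintegral_mono_ae hsplit).trans_eq ?_
  rw [lintegral_add_right _ (Measurable.tsum fun n => measurable_const.indicator (hbox _)),
    lintegral_indicator (hbox _), lintegral_tsum
      fun n => (measurable_const.indicator (hbox _)).aemeasurable, dyadicBoxSum,
    ← ENNReal.tsum_mul_left]
  simp only [lintegral_indicator (hbox _), setLIntegral_const, mul_assoc]

theorem measurable_martinKernel_circleMap (r φ : ℝ) : Measurable (Function.uncurry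
    fun s ζ => ENNReal.ofReal (martinKernel (circleMap 0 r (φ + s)) ζ)) :=
  (measurable_martinKernel.comp (by fun_prop :
    Measurable fun q : ℝ × ℂ => (circleMap 0 r (φ + q.1), q.2))).ennreal_ofReal

theorem eLpNorm'_setLIntegral_carlesonBox_le [SFinite lam] (hp : 1 ≤ p) (hδ : 0 < δ)
    (hδ1 : δ ≤ 1 / 8) (φ : ℝ) :
    eLpNorm' (fun s => ∫⁻ ζ in carlesonBox φ (2 * δ),
        ENNReal.ofReal (martinKernel (circleMap 0 (1 - δ) (φ + s)) ζ) ∂lam) p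
        (volume.restrict (Icc (-δ) δ)) ≤
      lam (carlesonBox φ (2 * δ)) *
        (ENNReal.ofReal (192 * p / δ) * ENNReal.ofReal (2 * δ) ^ (1 / p)) := by
  rw [← Measure.restrict_apply_univ (carlesonBox φ (2 * δ))]
  refine eLpNorm'_lintegral_le (measurable_martinKernel_circleMap _ φ) hp ?_
  filter_upwards [ae_restrict_mem (measurableSet_carlesonBox φ _)] with ζ hζ
  exact eLpNorm'_martinKernel_circleMap_le hp hδ hδ1 hζ

theorem volume_restrict_Icc_neg_self_univ (δ : ℝ) :
    volume.restrict (Icc (-δ) δ) univ = ENNReal.ofReal (2 * δ) := by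
  rw [Measure.restrict_apply_univ, Real.volume_Icc, sub_neg_eq_add, two_mul]

theorem eLpNorm'_martinPotential_circleMap_le [SFinite lam] (hlam : ∀ᵐ ζ ∂lam, ‖ζ‖ ≤ 1)
    (hp : 1 ≤ p) (hδ : 0 < δ) (hδ1 : δ ≤ 1 / 8) (φ : ℝ) :
    eLpNorm' (fun s => martinPotential lam (circleMap 0 (1 - δ) (φ + s))) p
        (volume.restrict (Icc (-δ) δ)) ≤
      ENNReal.ofReal ((192 * p + 32) / δ) * dyadicBoxSum lam δ φ *
        ENNReal.ofReal (2 * δ) ^ (1 / p) := by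
  have hp0 : 0 < p := by linarith
  set near : ℝ → ℝ≥0∞ := fun s => ∫⁻ ζ in carlesonBox φ (2 * δ),
    ENNReal.ofReal (martinKernel (circleMap 0 (1 - δ) (φ + s)) ζ) ∂lam
  set far : ℝ → ℝ≥0∞ := fun _ => ENNReal.ofReal (32 / δ) * dyadicBoxSum lam δ φ
  have hnear : Measurable near := (measurable_martinKernel_circleMap _ φ).lintegral_prod_right'
  calc eLpNorm' (fun s => martinPotential lam (circleMap 0 (1 - δ) (φ + s))) p
        (volume.restrict (Icc (-δ) δ))
      ≤ eLpNorm' (near + far) p (volume.restrict (Icc (-δ) δ)) := by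
        refine eLpNorm'_mono_enorm_ae hp0.le ?_
        filter_upwards [ae_restrict_mem measurableSet_Icc] with s hs
        exact martinPotential_circleMap_le hlam hδ hδ1 (abs_le.2 hs)
    _ ≤ eLpNorm' near p (volume.restrict (Icc (-δ) δ)) +
          eLpNorm' far p (volume.restrict (Icc (-δ) δ)) :=
        eLpNorm'_add_le hnear.aestronglyMeasurable aestronglyMeasurable_const hp
    _ ≤ dyadicBoxSum lam δ φ *
            (ENNReal.ofReal (192 * p / δ) * ENNReal.ofReal (2 * δ) ^ (1 / p)) +
          ENNReal.ofReal (32 / δ) * dyadicBoxSum lam δ φ * ENNReal.ofReal (2 * δ) ^ (1 / p) := by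
        refine add_le_add ((eLpNorm'_setLIntegral_carlesonBox_le hp hδ hδ1 φ).trans ?_) ?_
        · gcongr
          exact measure_carlesonBox_le_dyadicBoxSum lam δ φ
        · rw [eLpNorm'_const _ hp0, enorm_eq_self, volume_restrict_Icc_neg_self_univ]
    _ = _ := by
        rw [add_div, ENNReal.ofReal_add (by positivity) (by positivity)]
        ring

/-- Lebesgue measure on the angles `(0, 2π]`. -/
noncomputable abbrev angleMeasure : Measure ℝ := volume.restrict (Ioc 0 (2 * π))

/-- The `L^p` norm of the potential of `lam` on the circle of radius `r`, without the normalising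
factor of the integral mean `m_p`. -/
noncomputable def potentialMean (lam : Measure ℂ) (p r : ℝ) : ℝ≥0∞ :=
  eLpNorm' (fun θ => martinPotential lam (circleMap 0 r θ)) p angleMeasure

/-- The `L^p` norm of `φ ↦ λ(C(φ,δ))`. -/
noncomputable def boxMean (lam : Measure ℂ) (p δ : ℝ) : ℝ≥0∞ :=
  eLpNorm' (fun φ => lam (carlesonBox φ δ)) p angleMeasure

theorem potentialMean_le_eLpNorm'_dyadicBoxSum [SFinite lam] (hlam : ∀ᵐ ζ ∂lam, ‖ζ‖ ≤ 1)
    (hp : 1 ≤ p) (hδ : 0 < δ) (hδ1 : δ ≤ 1 / 8) :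
    potentialMean lam p (1 - δ) ≤
      eLpNorm' (fun φ => ENNReal.ofReal ((192 * p + 32) / δ) * dyadicBoxSum lam δ φ) p
        angleMeasure := by
  have : NeZero (volume.restrict (Icc (-δ) δ)) :=
    ⟨fun h => by simpa [h, hδ.not_ge] using volume_restrict_Icc_neg_self_univ δ⟩
  have hperiodic : Function.Periodic
      (fun θ => martinPotential lam (circleMap 0 (1 - δ) θ)) (2 * π) :=
    fun θ => by simp only [periodic_circleMap 0 (1 - δ) θ]
  have htranslates := eLpNorm'_le_of_translates_le
    (measurable_martinPotential.comp (continuous_circleMap 0 (1 - δ)).measurable)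
    Real.two_pi_pos hperiodic (zero_lt_one.trans_le hp) (η := volume.restrict (Icc (-δ) δ))
    (fun φ => by
      rw [volume_restrict_Icc_neg_self_univ]
      exact eLpNorm'_martinPotential_circleMap_le hlam hp hδ hδ1 φ) 0
  rwa [zero_add] at htranslates

theorem potentialMean_le_tsum_boxMean [SFinite lam] (hlam : ∀ᵐ ζ ∂lam, ‖ζ‖ ≤ 1)
    (hp : 1 ≤ p) (hδ : 0 < δ) (hδ1 : δ ≤ 1 / 8) :
    potentialMean lam p (1 - δ) ≤ ENNReal.ofReal ((192 * p + 32) / δ) *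
      ∑' n : ℕ, 4⁻¹ ^ n * boxMean lam p (2 ^ (n + 1) * δ) := by
  have hp0 : 0 < p := by linarith
  have hbox := fun n : ℕ => measurable_measure_carlesonBox lam (2 ^ (n + 1) * δ)
  calc _ ≤ _ := potentialMean_le_eLpNorm'_dyadicBoxSum hlam hp hδ hδ1
    _ ≤ ENNReal.ofReal ((192 * p + 32) / δ) * eLpNorm' (dyadicBoxSum lam δ) p angleMeasure :=
        eLpNorm'_const_mul_le _ (Measurable.tsum fun n => (hbox n).const_mul _) hp0
    _ ≤ ENNReal.ofReal ((192 * p + 32) / δ) * ∑' n : ℕ,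
          eLpNorm' (fun φ => 4⁻¹ ^ n * lam (carlesonBox φ (2 ^ (n + 1) * δ))) p angleMeasure := by
        gcongr
        exact eLpNorm'_tsum_le (fun n => (hbox n).const_mul _) hp
    _ ≤ _ := by
        gcongr with n
        exact eLpNorm'_const_mul_le _ (hbox n) hp0

theorem ae_measure_singleton_circleMap_eq_zero (lam : Measure ℂ) [SFinite lam] {r : ℝ}
    (hr : r ≠ 0) : ∀ᵐ φ : ℝ, lam {circleMap 0 r φ} = 0 := by
  set graph := {q : ℝ × ℂ | q.2 = circleMap 0 r q.1}
  have hgraph : MeasurableSet graph :=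
    (isClosed_eq continuous_snd (by fun_prop)).measurableSet
  have hnull : (volume : Measure ℝ).prod lam graph = 0 := by
    rw [Measure.prod_apply_symm hgraph]
    refine lintegral_eq_zero_of_ae_eq_zero (Eventually.of_forall fun ζ => ?_)
    refine (Countable.mono (fun φ hφ => ?_)
      ((countable_singleton ζ).preimage_circleMap 0 hr)).measure_zero volume
    exact (show ζ = circleMap 0 r φ from hφ).symm
  filter_upwards [Measure.measure_ae_null_of_prod_null hnull] with φ hφ using hφ

theorem measure_carlesonBox_le_martinPotential (hδ : 0 < δ) (hδ1 : δ ≤ 1)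
    (hatom : lam {circleMap 0 (1 - δ) φ} = 0) :
    lam (carlesonBox φ δ) ≤
      ENNReal.ofReal (200 * δ) * martinPotential lam (circleMap 0 (1 - δ) φ) := by
  have hlower : ∀ᵐ ζ ∂lam.restrict (carlesonBox φ δ), ENNReal.ofReal (1 / (200 * δ)) ≤
      ENNReal.ofReal (martinKernel (circleMap 0 (1 - δ) φ) ζ) := by
    filter_upwards [ae_restrict_mem (measurableSet_carlesonBox φ δ),
      ae_restrict_of_ae (compl_mem_ae_iff.2 hatom)] with ζ hζ hne
    exact ENNReal.ofReal_le_ofReal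
      (one_div_le_martinKernel_circleMap hδ hδ1 hζ fun h => hne h.symm)
  calc lam (carlesonBox φ δ)
      = ENNReal.ofReal (200 * δ) *
          ∫⁻ _ in carlesonBox φ δ, ENNReal.ofReal (1 / (200 * δ)) ∂lam := by
        rw [setLIntegral_const, ← mul_assoc, ← ENNReal.ofReal_mul (by positivity),
          mul_one_div_cancel (by positivity), ENNReal.ofReal_one, one_mul]
    _ ≤ _ := by
        gcongr
        exact (lintegral_mono_ae hlower).trans (setLIntegral_le_lintegral _ _)

theorem boxMean_le_potentialMean [SFinite lam] (hp : 0 < p) (hδ : 0 < δ) (hδ1 : δ < 1) :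
    boxMean lam p δ ≤ ENNReal.ofReal (200 * δ) * potentialMean lam p (1 - δ) := by
  refine eLpNorm'_le_mul_eLpNorm'_of_ae_le_mul (measurable_martinPotential.comp
    (continuous_circleMap 0 (1 - δ)).measurable).aestronglyMeasurable ?_ hp
  filter_upwards [ae_restrict_of_ae
    (ae_measure_singleton_circleMap_eq_zero lam (sub_pos.2 hδ1).ne')] with φ hφ
  exact measure_carlesonBox_le_martinPotential hδ hδ1.le hφ

theorem boxMean_le_measure_univ (lam : Measure ℂ) (hp : 0 < p) (δ : ℝ) :
    boxMean lam p δ ≤ lam univ * ENNReal.ofReal (2 * π) ^ (1 / p) := by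
  calc boxMean lam p δ ≤ eLpNorm' (fun _ => lam univ) p angleMeasure :=
        eLpNorm'_mono_enorm_ae hp.le (ae_of_all _ fun φ => measure_mono (subset_univ _))
    _ = lam univ * ENNReal.ofReal (2 * π) ^ (1 / p) := by
        rw [eLpNorm'_const _ hp, enorm_eq_self, angleMeasure, Measure.restrict_apply_univ,
          Real.volume_Ioc, sub_zero]

theorem boxMean_mul_le {γ a : ℝ} {K : ℝ≥0∞} (hp : 0 < p) (hγ : γ ≤ 1)
    (hK : ∀ t ∈ Ioo (0 : ℝ) 1, boxMean lam p t ≤ K * ENNReal.ofReal (t ^ γ)) (ha : 1 ≤ a)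
    (hδ : 0 < δ) (hδ1 : δ ≤ 1) :
    boxMean lam p (a * δ) ≤
      (K + lam univ * ENNReal.ofReal (2 * π) ^ (1 / p)) * ENNReal.ofReal (a * δ ^ γ) := by
  rw [add_mul]
  rcases lt_or_ge (a * δ) 1 with hlt | hge
  · refine le_add_right ((hK _ ⟨by positivity, hlt⟩).trans ?_)
    gcongr
    rw [Real.mul_rpow (by positivity) hδ.le]
    gcongr
    exact Real.rpow_le_self_of_one_le ha hγ
  · have hscale : 1 ≤ a * δ ^ γ :=
      hge.trans (by gcongr; exact Real.self_le_rpow_of_le_one hδ.le hδ1 hγ)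
    refine le_add_left ((boxMean_le_measure_univ lam hp _).trans ?_)
    exact le_mul_of_one_le_right' (ENNReal.one_le_ofReal.2 hscale)

theorem tsum_inv_four_pow_mul_two_pow : ∑' n : ℕ, (4⁻¹ : ℝ≥0∞) ^ n * 2 ^ (n + 1) = 4 := by
  have hterm (n : ℕ) : (4⁻¹ : ℝ≥0∞) ^ n * 2 ^ (n + 1) = 2 * 2⁻¹ ^ n := by
    rw [show (4 : ℝ≥0∞) = 2 * 2 by norm_num, ENNReal.mul_inv (by simp) (by simp), mul_pow,
      pow_succ, mul_comm (2 ^ n), mul_comm, mul_assoc, ← mul_assoc (2 ^ n), ← mul_pow,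
      ENNReal.mul_inv_cancel (by simp) (by simp), one_pow, one_mul]
  simp only [hterm]
  rw [ENNReal.tsum_mul_left, ENNReal.tsum_geometric, ENNReal.one_sub_inv_two, inv_inv]
  norm_num

theorem potentialMean_le_of_boxMean_le [SFinite lam] {γ : ℝ} {K : ℝ≥0∞}
    (hlam : ∀ᵐ ζ ∂lam, ‖ζ‖ ≤ 1) (hp : 1 ≤ p) (hγ : γ ≤ 1)
    (hK : ∀ t ∈ Ioo (0 : ℝ) 1, boxMean lam p t ≤ K * ENNReal.ofReal (t ^ γ)) (hδ : 0 < δ)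
    (hδ1 : δ ≤ 1 / 8) :
    potentialMean lam p (1 - δ) ≤ ENNReal.ofReal ((192 * p + 32) / δ) *
      (4 * (K + lam univ * ENNReal.ofReal (2 * π) ^ (1 / p)) * ENNReal.ofReal (δ ^ γ)) := by
  have hp0 : 0 < p := by linarith
  refine (potentialMean_le_tsum_boxMean hlam hp hδ hδ1).trans ?_
  gcongr
  set M := K + lam univ * ENNReal.ofReal (2 * π) ^ (1 / p)
  calc ∑' n : ℕ, 4⁻¹ ^ n * boxMean lam p (2 ^ (n + 1) * δ)
      ≤ ∑' n : ℕ, 4⁻¹ ^ n * (M * ENNReal.ofReal (2 ^ (n + 1) * δ ^ γ)) := by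
        gcongr with n
        exact boxMean_mul_le hp0 hγ hK (one_le_pow₀ one_le_two) hδ (by linarith)
    _ = ∑' n : ℕ, 4⁻¹ ^ n * 2 ^ (n + 1) * (M * ENNReal.ofReal (δ ^ γ)) := by
        refine tsum_congr fun n => ?_
        rw [ENNReal.ofReal_mul (by positivity), ENNReal.ofReal_pow zero_le_two,
          ENNReal.ofReal_ofNat]
        ring
    _ = 4 * M * ENNReal.ofReal (δ ^ γ) := by
        rw [ENNReal.tsum_mul_right, tsum_inv_four_pow_mul_two_pow, mul_assoc]

theorem boxMean_ne_top [IsFiniteMeasure lam] (hp : 0 < p) (δ : ℝ) : boxMean lam p δ ≠ ∞ :=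
  ne_top_of_le_ne_top (by finiteness) (boxMean_le_measure_univ lam hp δ)

theorem potentialMean_ne_top [IsFiniteMeasure lam] (hlam : ∀ᵐ ζ ∂lam, ‖ζ‖ ≤ 1) (hp : 1 ≤ p)
    (hδ : 0 < δ) (hδ1 : δ ≤ 1 / 8) : potentialMean lam p (1 - δ) ≠ ∞ := by
  refine ne_top_of_le_ne_top ?_ (potentialMean_le_of_boxMean_le hlam hp zero_le_one
    (fun t _ => ?_) hδ hδ1 (K := lam univ * ENNReal.ofReal (2 * π) ^ (1 / p)))
  · finiteness
  · rw [Real.rpow_zero, ENNReal.ofReal_one, mul_one]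
    exact boxMean_le_measure_univ lam (by linarith) t

end Potential

section Growth

variable {f : ℝ → ℝ}

theorem isBigO_rpow_nhdsGT_zero_iff {γ B : ℝ} (hγ : γ ≤ 1) (hf : ∀ δ, 0 ≤ f δ)
    (hB : ∀ δ, f δ ≤ B) :
    f =O[𝓝[>] 0] (· ^ γ) ↔ ∃ C, ∀ δ ∈ Ioo (0 : ℝ) 1, f δ ≤ C * δ ^ γ := by
  refine ⟨fun h => ?_, fun ⟨C, hC⟩ => ?_⟩
  · obtain ⟨c, hc0, hc⟩ := h.exists_pos
    obtain ⟨a, ha, hsub⟩ := mem_nhdsGT_iff_exists_Ioo_subset.1 hc.bound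
    have ha0 : 0 < a := ha
    have hB0 : 0 ≤ B := (hf 0).trans (hB 0)
    refine ⟨c + B / a, fun δ ⟨hδ, hδ1⟩ => ?_⟩
    rw [add_mul]
    rcases lt_or_ge δ a with hlt | hge
    · have hbound : ‖f δ‖ ≤ c * ‖δ ^ γ‖ := hsub ⟨hδ, hlt⟩
      rw [Real.norm_of_nonneg (hf δ), Real.norm_of_nonneg (by positivity)] at hbound
      exact hbound.trans (le_add_of_nonneg_right (by positivity))
    · have hfar : f δ ≤ B / a * δ ^ γ := by
        calc f δ ≤ B / a * a := (hB δ).trans_eq (div_mul_cancel₀ _ ha0.ne').symm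
          _ ≤ B / a * δ ^ γ := by
            gcongr
            exact hge.trans (Real.self_le_rpow_of_le_one hδ.le hδ1.le hγ)
      exact hfar.trans (le_add_of_nonneg_left (by positivity))
  · refine IsBigO.of_bound C ?_
    filter_upwards [Ioo_mem_nhdsGT one_pos] with δ hδ
    rw [Real.norm_of_nonneg (hf δ), Real.norm_of_nonneg (Real.rpow_nonneg hδ.1.le γ)]
    exact hC δ hδ

theorem isBigO_rpow_comp_one_sub_iff {β : ℝ} (hf : ∀ r, 0 ≤ f r) :
    (fun δ => f (1 - δ)) =O[𝓝[>] 0] (· ^ β) ↔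
      ∃ C, ∃ r₀ ∈ Ico (0 : ℝ) 1, ∀ r ∈ Ioo r₀ 1, f r ≤ C * (1 - r) ^ β := by
  refine ⟨fun h => ?_, fun ⟨C, r₀, hr₀, hC⟩ => ?_⟩
  · obtain ⟨c, hc⟩ := h.bound
    obtain ⟨a, ha, hsub⟩ := mem_nhdsGT_iff_exists_Ioo_subset.1 hc
    refine ⟨c, max 0 (1 - a), ⟨le_max_left _ _, max_lt one_pos (sub_lt_self 1 ha)⟩, fun r hr => ?_⟩
    have hr0 : 0 < 1 - r := sub_pos.2 hr.2
    have hbound : ‖f (1 - (1 - r))‖ ≤ c * ‖(1 - r) ^ β‖ :=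
      hsub ⟨hr0, by linarith [le_max_right 0 (1 - a), hr.1]⟩
    rwa [sub_sub_cancel, Real.norm_of_nonneg (hf r), Real.norm_of_nonneg (by positivity)] at hbound
  · refine IsBigO.of_bound C ?_
    filter_upwards [Ioo_mem_nhdsGT (sub_pos.2 hr₀.2)] with δ hδ
    have hbound := hC (1 - δ) ⟨by linarith [hδ.2], by linarith [hδ.1]⟩
    rw [sub_sub_cancel] at hbound
    rwa [Real.norm_of_nonneg (hf _), Real.norm_of_nonneg (Real.rpow_nonneg hδ.1.le β)]

theorem potentialMean_isBigO_of_boxMean_isBigO {lam : Measure ℂ} [IsFiniteMeasure lam] {p γ : ℝ}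
    (hlam : ∀ᵐ ζ ∂lam, ‖ζ‖ ≤ 1) (hp : 1 ≤ p) (hγ : γ ≤ 1)
    (h : (fun δ => (boxMean lam p δ).toReal) =O[𝓝[>] 0] (· ^ γ)) :
    (fun δ => (potentialMean lam p (1 - δ)).toReal) =O[𝓝[>] 0] (· ^ (γ - 1)) := by
  have hp0 : 0 < p := by linarith
  set T := lam univ * ENNReal.ofReal (2 * π) ^ (1 / p)
  have hT : T ≠ ∞ := by finiteness
  obtain ⟨C, hC⟩ := (isBigO_rpow_nhdsGT_zero_iff hγ (fun _ => ENNReal.toReal_nonneg)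
    fun δ => ENNReal.toReal_mono hT (boxMean_le_measure_univ lam hp0 δ)).1 h
  have hK : ∀ t ∈ Ioo (0 : ℝ) 1,
      boxMean lam p t ≤ ENNReal.ofReal C * ENNReal.ofReal (t ^ γ) := fun t ht => by
    rw [← ENNReal.ofReal_mul' (Real.rpow_nonneg ht.1.le γ),
      ← ENNReal.ofReal_toReal (boxMean_ne_top hp0 t)]
    exact ENNReal.ofReal_le_ofReal (hC t ht)
  refine IsBigO.of_bound ((192 * p + 32) * (4 * (ENNReal.ofReal C + T).toReal)) ?_
  filter_upwards [Ioo_mem_nhdsGT (show (0 : ℝ) < 1 / 8 by norm_num)] with δ ⟨hδ, hδ1⟩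
  rw [Real.norm_of_nonneg ENNReal.toReal_nonneg, Real.norm_of_nonneg (by positivity)]
  calc (potentialMean lam p (1 - δ)).toReal
      ≤ (ENNReal.ofReal ((192 * p + 32) / δ) *
          (4 * (ENNReal.ofReal C + T) * ENNReal.ofReal (δ ^ γ))).toReal :=
        ENNReal.toReal_mono (by finiteness)
          (potentialMean_le_of_boxMean_le hlam hp hγ hK hδ hδ1.le)
    _ = (192 * p + 32) / δ * (4 * (ENNReal.ofReal C + T).toReal * δ ^ γ) := by
        simp only [ENNReal.toReal_mul, ENNReal.toReal_ofNat]
        rw [ENNReal.toReal_ofReal (by positivity), ENNReal.toReal_ofReal (by positivity)]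
    _ = (192 * p + 32) * (4 * (ENNReal.ofReal C + T).toReal) * δ ^ (γ - 1) := by
        rw [Real.rpow_sub_one hδ.ne']
        ring

theorem boxMean_isBigO_of_potentialMean_isBigO {lam : Measure ℂ} [IsFiniteMeasure lam] {p γ : ℝ}
    (hlam : ∀ᵐ ζ ∂lam, ‖ζ‖ ≤ 1) (hp : 1 ≤ p)
    (h : (fun δ => (potentialMean lam p (1 - δ)).toReal) =O[𝓝[>] 0] (· ^ (γ - 1))) :
    (fun δ => (boxMean lam p δ).toReal) =O[𝓝[>] 0] (· ^ γ) := by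
  have hsmall : ∀ᶠ δ : ℝ in 𝓝[>] 0, δ ∈ Ioo (0 : ℝ) (1 / 8) := Ioo_mem_nhdsGT (by norm_num)
  have hbox : (fun δ => (boxMean lam p δ).toReal) =O[𝓝[>] 0]
      fun δ => δ * (potentialMean lam p (1 - δ)).toReal := by
    refine IsBigO.of_bound 200 ?_
    filter_upwards [hsmall] with δ ⟨hδ, hδ1⟩
    rw [Real.norm_of_nonneg ENNReal.toReal_nonneg, Real.norm_of_nonneg (by positivity)]
    calc (boxMean lam p δ).toReal
        ≤ (ENNReal.ofReal (200 * δ) * potentialMean lam p (1 - δ)).toReal :=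
          ENNReal.toReal_mono
            (ENNReal.mul_ne_top ENNReal.ofReal_ne_top (potentialMean_ne_top hlam hp hδ hδ1.le))
            (boxMean_le_potentialMean (by linarith) hδ (by linarith))
      _ = 200 * (δ * (potentialMean lam p (1 - δ)).toReal) := by
          rw [ENNReal.toReal_mul, ENNReal.toReal_ofReal (by positivity), mul_assoc]
  refine (hbox.trans ((isBigO_refl _ _).mul h)).congr' EventuallyEq.rfl ?_
  filter_upwards [hsmall] with δ hδ
  rw [Real.rpow_sub_one hδ.1.ne', mul_div_cancel₀ _ hδ.1.ne']

theorem potentialMean_isBigO_iff_boxMean_isBigO {lam : Measure ℂ} [IsFiniteMeasure lam] {p γ : ℝ}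
    (hlam : ∀ᵐ ζ ∂lam, ‖ζ‖ ≤ 1) (hp : 1 ≤ p) (hγ : γ ≤ 1) :
    (fun δ => (potentialMean lam p (1 - δ)).toReal) =O[𝓝[>] 0] (· ^ (γ - 1)) ↔
      (fun δ => (boxMean lam p δ).toReal) =O[𝓝[>] 0] (· ^ γ) :=
  ⟨boxMean_isBigO_of_potentialMean_isBigO hlam hp,
    potentialMean_isBigO_of_boxMean_isBigO hlam hp hγ⟩

end Growth

section CompleteMeasure

variable {μ : Measure ℂ} {ψ : Measure ℝ} {z : ℂ}

/-- The complete measure of a subharmonic function with Riesz measure `μ` and boundary measure `ψ`: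
the density `1 - |ζ|` with respect to `μ` inside the disc, plus `ψ` carried to the unit circle. -/
noncomputable def completeMeasure (μ : Measure ℂ) (ψ : Measure ℝ) : Measure ℂ :=
  (μ.restrict (Metric.ball 0 1)).withDensity (fun ζ => ENNReal.ofReal (1 - ‖ζ‖)) +
    ψ.map fun θ : ℝ => exp (θ * I)

theorem measurable_exp_ofReal_mul_I : Measurable fun θ : ℝ => exp (θ * I) := by fun_prop

theorem eq_completeMeasure_of_forall_apply {lam : Measure ℂ}
    (hlam : ∀ M : Set ℂ, MeasurableSet M →
      lam M = (∫⁻ ζ in Metric.ball (0 : ℂ) 1 ∩ M, ENNReal.ofReal (1 - ‖ζ‖) ∂μ) +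
        ψ ((fun θ : ℝ => exp (θ * I)) ⁻¹' (M ∩ Metric.sphere (0 : ℂ) 1))) :
    lam = completeMeasure μ ψ := by
  have hcircle : (fun θ : ℝ => exp (θ * I)) ⁻¹' Metric.sphere (0 : ℂ) 1 = univ :=
    eq_univ_of_forall fun θ => by simp [norm_exp_ofReal_mul_I]
  ext M hM
  rw [hlam M hM, completeMeasure, Measure.add_apply, withDensity_apply _ hM,
    Measure.map_apply measurable_exp_ofReal_mul_I hM, Measure.restrict_restrict hM, inter_comm M,
    preimage_inter, hcircle, univ_inter, inter_comm M]

theorem isFiniteMeasure_completeMeasure [IsFiniteMeasure ψ]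
    (hμ : ∫⁻ ζ in Metric.ball (0 : ℂ) 1, ENNReal.ofReal (1 - ‖ζ‖) ∂μ ≠ ∞) :
    IsFiniteMeasure (completeMeasure μ ψ) := by
  have := isFiniteMeasure_withDensity hμ
  unfold completeMeasure
  infer_instance

theorem ae_norm_le_one_completeMeasure : ∀ᵐ ζ ∂completeMeasure μ ψ, ‖ζ‖ ≤ 1 := by
  refine ae_add_measure_iff.2 ⟨(withDensity_absolutelyContinuous _ _).ae_le ?_, ?_⟩
  · filter_upwards [ae_restrict_mem Metric.isOpen_ball.measurableSet] with ζ hζ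
    exact (mem_ball_zero_iff.1 hζ).le
  · rw [ae_map_iff measurable_exp_ofReal_mul_I.aemeasurable
      (measurableSet_le measurable_norm measurable_const)]
    exact ae_of_all _ fun θ => (norm_exp_ofReal_mul_I θ).le

theorem martinPotential_completeMeasure (μ : Measure ℂ) (ψ : Measure ℝ) (z : ℂ) :
    martinPotential (completeMeasure μ ψ) z =
      (∫⁻ ζ in Metric.ball 0 1, ENNReal.ofReal (discGreen z ζ) ∂μ) +
        ∫⁻ θ : ℝ, ENNReal.ofReal
          (1 / (2 * π) * ((1 - ‖z‖ ^ 2) / ‖exp (θ * I) - z‖ ^ 2)) ∂ψ := by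
  have hkernel : Measurable fun ζ => ENNReal.ofReal (martinKernel z ζ) :=
    (measurable_martinKernel.comp measurable_prodMk_left).ennreal_ofReal
  rw [martinPotential, completeMeasure, lintegral_add_measure,
    lintegral_withDensity_eq_lintegral_mul _ (by fun_prop) hkernel,
    lintegral_map hkernel measurable_exp_ofReal_mul_I]
  congr 1
  · refine setLIntegral_congr_fun Metric.isOpen_ball.measurableSet fun ζ hζ => ?_
    have hζ1 : 0 < 1 - ‖ζ‖ := sub_pos.2 (mem_ball_zero_iff.1 hζ)
    rw [Pi.mul_apply, ← ENNReal.ofReal_mul hζ1.le, martinKernel, if_pos (sub_pos.1 hζ1),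
      mul_div_cancel₀ _ hζ1.ne']
  · simp only [martinKernel, norm_exp_ofReal_mul_I, lt_irrefl, if_false]

theorem integral_log_sub_integral_poisson_eq_neg_martinPotential (hz : ‖z‖ < 1)
    (hfin : martinPotential (completeMeasure μ ψ) z ≠ ∞) :
    (∫ ζ in Metric.ball (0 : ℂ) 1, Real.log (‖z - ζ‖ / ‖1 - z * (starRingEnd ℂ) ζ‖) ∂μ) -
        1 / (2 * π) * ∫ θ : ℝ, (1 - ‖z‖ ^ 2) / ‖exp (θ * I) - z‖ ^ 2 ∂ψ =
      -(martinPotential (completeMeasure μ ψ) z).toReal := by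
  rw [martinPotential_completeMeasure] at hfin ⊢
  obtain ⟨hgreen, hpoisson⟩ := ENNReal.add_ne_top.1 hfin
  rw [ENNReal.toReal_add hgreen hpoisson, neg_add, sub_eq_add_neg, ← integral_const_mul,
    ← integral_eq_lintegral_of_nonneg_ae, ← integral_eq_lintegral_of_nonneg_ae]
  · simp only [discGreen, integral_neg, neg_neg]
  · have := one_sub_norm_sq_pos hz
    exact ae_of_all _ fun θ => by positivity
  · exact Measurable.aestronglyMeasurable (by fun_prop)
  · filter_upwards [ae_restrict_mem Metric.isOpen_ball.measurableSet] with ζ hζ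
    exact discGreen_nonneg hz (mem_ball_zero_iff.1 hζ)
  · unfold discGreen
    exact Measurable.aestronglyMeasurable (by fun_prop)

end CompleteMeasure

section IntegralMean

variable {p r : ℝ}

theorem toReal_boxMean (lam : Measure ℂ) [IsFiniteMeasure lam] (hp : 0 ≤ p) (δ : ℝ) :
    (boxMean lam p δ).toReal =
      (∫ φ in (0 : ℝ)..(2 * π), (lam (carlesonBox φ δ)).toReal ^ p) ^ (1 / p) := by
  rw [boxMean, toReal_eLpNorm'_eq_integral
    (measurable_measure_carlesonBox lam δ).aestronglyMeasurable
    (ae_of_all _ fun φ => measure_lt_top lam _) hp,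
    intervalIntegral.integral_of_le Real.two_pi_pos.le]
  rfl

theorem mpMean_eq_toReal_eLpNorm' {u : ℂ → ℝ}
    (hu : AEStronglyMeasurable (fun θ => u (circleMap 0 r θ)) angleMeasure) (hp : 0 ≤ p) :
    mpMean p r u = (1 / (2 * π)) ^ (1 / p) *
      (eLpNorm' (fun θ => u (circleMap 0 r θ)) p angleMeasure).toReal := by
  rw [toReal_eLpNorm'_eq_integral hu (ae_of_all _ fun _ => enorm_lt_top) hp, mpMean,
    Real.mul_rpow (by positivity) (intervalIntegral.integral_nonneg Real.two_pi_pos.le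
      fun _ _ => by positivity), intervalIntegral.integral_of_le Real.two_pi_pos.le]
  simp only [circleMap_zero, toReal_enorm, Real.norm_eq_abs]

theorem abs_mpMean_sub_potentialMean_le {u : ℂ → ℝ} {lam : Measure ℂ} [SFinite lam] {C : ℝ}
    (hp : 1 ≤ p) (hfin : potentialMean lam p r ≠ ∞)
    (hu : ∀ θ, martinPotential lam (circleMap 0 r θ) ≠ ∞ →
      u (circleMap 0 r θ) = C - (martinPotential lam (circleMap 0 r θ)).toReal) :
    |mpMean p r u - (1 / (2 * π)) ^ (1 / p) * (potentialMean lam p r).toReal| ≤ |C| := by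
  have hp0 : 0 < p := by linarith
  have hmeas : Measurable fun θ => martinPotential lam (circleMap 0 r θ) :=
    measurable_martinPotential.comp (continuous_circleMap 0 r).measurable
  have hae : (fun θ => u (circleMap 0 r θ)) =ᵐ[angleMeasure]
      fun θ => C - (martinPotential lam (circleMap 0 r θ)).toReal := by
    filter_upwards [ae_lt_top_of_eLpNorm'_ne_top hmeas hp0 hfin] with θ hθ using hu θ hθ.ne
  rw [mpMean_eq_toReal_eLpNorm'
    ((hmeas.ennreal_toReal.const_sub C).aestronglyMeasurable.congr hae.symm) hp0.le,
    ← mul_sub, abs_mul, abs_of_nonneg (by positivity)]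
  calc (1 / (2 * π)) ^ (1 / p) * _
      ≤ (1 / (2 * π)) ^ (1 / p) * (|C| * angleMeasure.real univ ^ (1 / p)) := by
        gcongr
        exact abs_toReal_eLpNorm'_sub_le hmeas hp hfin hae
    _ = |C| := by
        rw [measureReal_restrict_apply_univ, Real.volume_real_Ioc_of_le Real.two_pi_pos.le,
          sub_zero, mul_left_comm, ← Real.mul_rpow (by positivity) (by positivity),
          one_div_mul_cancel Real.two_pi_pos.ne', Real.one_rpow, mul_one]

theorem mpMean_isBigO_iff_potentialMean_isBigO {u : ℂ → ℝ} {lam : Measure ℂ} [IsFiniteMeasure lam]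
    {C γ : ℝ} (hlam : ∀ᵐ ζ ∂lam, ‖ζ‖ ≤ 1) (hp : 1 ≤ p) (hγ : γ ≤ 1)
    (hu : ∀ z, ‖z‖ < 1 → martinPotential lam z ≠ ∞ → u z = C - (martinPotential lam z).toReal) :
    (fun δ => mpMean p (1 - δ) u) =O[𝓝[>] 0] (· ^ (γ - 1)) ↔
      (fun δ => (potentialMean lam p (1 - δ)).toReal) =O[𝓝[>] 0] (· ^ (γ - 1)) := by
  set a : ℝ := (1 / (2 * π)) ^ (1 / p)
  have ha : a ≠ 0 := by positivity
  have hdiff : (fun δ => mpMean p (1 - δ) u - a * (potentialMean lam p (1 - δ)).toReal)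
      =O[𝓝[>] 0] (· ^ (γ - 1)) := by
    refine IsBigO.of_bound |C| ?_
    filter_upwards [Ioo_mem_nhdsGT (show (0 : ℝ) < 1 / 8 by norm_num)] with δ ⟨hδ, hδ1⟩
    have hdiff_le := abs_mpMean_sub_potentialMean_le hp (potentialMean_ne_top hlam hp hδ hδ1.le)
      fun θ => hu _ (by rw [norm_circleMap_zero, abs_of_pos] <;> linarith)
    have hone : 1 ≤ δ ^ (γ - 1) :=
      Real.one_le_rpow_of_pos_of_le_one_of_nonpos hδ (by linarith) (by linarith)
    rw [Real.norm_eq_abs, Real.norm_of_nonneg (by positivity)]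
    exact hdiff_le.trans (le_mul_of_one_le_right (abs_nonneg C) hone)
  exact hdiff.congr_of_sub.trans (isBigO_const_mul_left_iff ha)

theorem mpMean_nonneg (p r : ℝ) (u : ℂ → ℝ) : 0 ≤ mpMean p r u :=
  Real.rpow_nonneg (mul_nonneg (by positivity) (intervalIntegral.integral_nonneg
    Real.two_pi_pos.le fun _ _ => by positivity)) _

end IntegralMean

theorem stmt0_general (u : ℂ → ℝ) (μ : Measure ℂ) (ψ : Measure ℝ) [IsFiniteMeasure ψ]
    (lam : Measure ℂ) (C : ℝ) (γ p : ℝ) (hγ1 : γ ≤ 1) (hp : 1 ≤ p)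
    (hμfin : ∫⁻ ζ in Metric.ball (0 : ℂ) 1, ENNReal.ofReal (1 - ‖ζ‖) ∂μ < ∞)
    (hrep : ∀ z ∈ Metric.ball (0 : ℂ) 1,
      u z = (∫ ζ in Metric.ball (0 : ℂ) 1,
          Real.log (‖z - ζ‖ / ‖1 - z * (starRingEnd ℂ) ζ‖) ∂μ) -
        (1 / (2 * π)) * (∫ θ, (1 - ‖z‖ ^ 2) / ‖exp (θ * I) - z‖ ^ 2 ∂ψ) + C)
    (hlam : ∀ M : Set ℂ, MeasurableSet M →
      lam M = (∫⁻ ζ in Metric.ball (0 : ℂ) 1 ∩ M, ENNReal.ofReal (1 - ‖ζ‖) ∂μ) +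
        ψ ((fun θ : ℝ => exp (θ * I)) ⁻¹' (M ∩ Metric.sphere (0 : ℂ) 1))) :
    (∃ C₁ : ℝ, ∃ r₀ ∈ Ico (0 : ℝ) 1, ∀ r ∈ Ioo r₀ 1, mpMean p r u ≤ C₁ * (1 - r) ^ (γ - 1)) ↔
      ∃ C₂ : ℝ, ∀ δ ∈ Ioo (0 : ℝ) 1,
        (∫ φ in (0 : ℝ)..(2 * π), (lam (carlesonBox φ δ)).toReal ^ p) ^ (1 / p) ≤ C₂ * δ ^ γ := by
  have hp0 : 0 < p := by linarith
  obtain rfl := eq_completeMeasure_of_forall_apply hlam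
  have := isFiniteMeasure_completeMeasure (ψ := ψ) hμfin.ne
  have hsupp : ∀ᵐ ζ ∂completeMeasure μ ψ, ‖ζ‖ ≤ 1 := ae_norm_le_one_completeMeasure
  have hu : ∀ z, ‖z‖ < 1 → martinPotential (completeMeasure μ ψ) z ≠ ∞ →
      u z = C - (martinPotential (completeMeasure μ ψ) z).toReal := fun z hz hfin => by
    rw [hrep z (mem_ball_zero_iff.2 hz),
      integral_log_sub_integral_poisson_eq_neg_martinPotential hz hfin, neg_add_eq_sub]
  rw [← isBigO_rpow_comp_one_sub_iff fun r => mpMean_nonneg p r u,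
    mpMean_isBigO_iff_potentialMean_isBigO hsupp hp hγ1 hu,
    potentialMean_isBigO_iff_boxMean_isBigO hsupp hp hγ1,
    isBigO_rpow_nhdsGT_zero_iff hγ1 (fun _ => ENNReal.toReal_nonneg) fun δ =>
      ENNReal.toReal_mono (by finiteness) (boxMean_le_measure_univ _ hp0 δ)]
  simp only [toReal_boxMean _ hp0.le]

end Development

/-- For a subharmonic `u` bounded above on `𝔻` with representation
`u(z) = ∫_𝔻 log(|z-ζ|/|1-z·conj ζ|) dμ(ζ) - (1/2π)∫₀^{2π} (1-|z|²)/|e^{iθ}-z|² dψ(θ) + C`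
and complete measure `λ`, one has `m_p(r,u) = O((1-r)^{γ-1})` as `r ↑ 1` iff
`(∫₀^{2π} λ(C(φ,δ))^p dφ)^{1/p} = O(δ^γ)` for `0 < δ < 1`. -/
theorem stmt0 (u : ℂ → ℝ) (μ : Measure ℂ) (ψ : Measure ℝ) [IsFiniteMeasure ψ]
    (lam : Measure ℂ) (C : ℝ) (γ p : ℝ) (hγ : 0 < γ) (hγ1 : γ ≤ 1) (hp : 1 < p)
    -- `u` is bounded from above on `𝔻`
    (hbdd : ∃ B : ℝ, ∀ z ∈ Metric.ball (0 : ℂ) 1, u z ≤ B)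
    -- `μ` is a positive Borel measure on `𝔻` with `∫_𝔻 (1-|ζ|) dμ(ζ) < ∞`
    (hμD : μ (Metric.ball (0 : ℂ) 1)ᶜ = 0)
    (hμfin : ∫⁻ ζ in Metric.ball (0 : ℂ) 1, ENNReal.ofReal (1 - ‖ζ‖) ∂μ < ⊤)
    -- `ψ` is a finite positive Borel measure on `[0,2π)`
    (hψ : ψ (Set.Ico (0 : ℝ) (2 * Real.pi))ᶜ = 0)
    -- representation of `u`
    (hrep : ∀ z ∈ Metric.ball (0 : ℂ) 1,
      u z = (∫ ζ in Metric.ball (0 : ℂ) 1,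
          Real.log (‖z - ζ‖ / ‖1 - z * (starRingEnd ℂ) ζ‖) ∂μ) -
        (1 / (2 * Real.pi)) *
          (∫ θ, (1 - ‖z‖ ^ 2) / ‖Complex.exp (θ * Complex.I) - z‖ ^ 2 ∂ψ)
        + C)
    -- `λ` is the complete measure of `u`
    (hlam : ∀ M : Set ℂ, MeasurableSet M →
      lam M = (∫⁻ ζ in Metric.ball (0 : ℂ) 1 ∩ M, ENNReal.ofReal (1 - ‖ζ‖) ∂μ) +
        ψ ((fun θ : ℝ => Complex.exp (θ * Complex.I)) ⁻¹' (M ∩ Metric.sphere (0 : ℂ) 1))) :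
    (∃ C₁ : ℝ, ∃ r₀ ∈ Set.Ico (0 : ℝ) 1, ∀ r ∈ Set.Ioo r₀ 1,
        mpMean p r u ≤ C₁ * (1 - r) ^ (γ - 1)) ↔
      (∃ C₂ : ℝ, ∀ δ ∈ Set.Ioo (0 : ℝ) 1,
        (∫ φ in (0 : ℝ)..(2 * Real.pi), (lam (carlesonBox φ δ)).toReal ^ p) ^ (1 / p) ≤
          C₂ * δ ^ γ) :=
  stmt0_general u μ ψ lam C γ p hγ1 hp.le hμfin hrep hlam
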